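/- arXiv:2411.01323 — 4 statements merged into one kernel-verified Lean document; each statement's English description precedes it below -/
import Mathlib

section
/- Let K = GF(q) be a finite field with q ≡ 3 (mod 4) and (V, f) a finite-dimensional nondegenerate symmetric bilinear space over K. Let φ ∈ Ω(V) and suppose there exists η ∈ O(V) with η² = −id and ηφη⁻¹ = φ⁻¹. Then φ is bireflectional in Ω(V). -/
open Polynomial Module

namespace Biref

variable {K V : Type*} [Field K] [AddCommGroup V] [Module K V]

/-- The orthogonal group of a bilinear form: all linear automorphisms preserving `f`. -/
def orthGroup (f : LinearMap.BilinForm K V) : Subgroup (V ≃ₗ[K] V) where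
  carrier := {φ | ∀ x y : V, f (φ x) (φ y) = f x y}
  one_mem' := fun _ _ => rfl
  mul_mem' := by
    intro a b ha hb x y
    simpa using (ha (b x) (b y)).trans (hb x y)
  inv_mem' := by
    intro a ha x y
    show f (a.symm x) (a.symm y) = f x y
    conv_rhs => rw [← a.apply_symm_apply x, ← a.apply_symm_apply y]
    exact (ha _ _).symm

/-- The special orthogonal group: isometries of determinant 1. -/
def specialOrthGroup (f : LinearMap.BilinForm K V) : Subgroup (V ≃ₗ[K] V) where
  carrier := {φ | (∀ x y : V, f (φ x) (φ y) = f x y) ∧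
      LinearMap.det (φ : V →ₗ[K] V) = 1}
  one_mem' := ⟨fun _ _ => rfl, by simp⟩
  mul_mem' := by
    rintro a b ⟨ha, ha'⟩ ⟨hb, hb'⟩
    refine ⟨fun x y => by simpa using (ha (b x) (b y)).trans (hb x y), ?_⟩
    rw [LinearEquiv.coe_toLinearMap_mul, map_mul, ha', hb', one_mul]
  inv_mem' := by
    rintro a ⟨ha, ha'⟩
    refine ⟨fun x y => ?_, ?_⟩
    · show f (a.symm x) (a.symm y) = f x y
      conv_rhs => rw [← a.apply_symm_apply x, ← a.apply_symm_apply y]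
      exact (ha _ _).symm
    · have h1 : LinearMap.det ((a⁻¹ * a : V ≃ₗ[K] V) : V →ₗ[K] V) = 1 := by
        rw [inv_mul_cancel, LinearEquiv.coe_toLinearMap_one, LinearMap.det_id]
      rw [LinearEquiv.coe_toLinearMap_mul, map_mul, ha', mul_one] at h1
      exact h1

/-- The commutator subgroup `Ω(V)` of the orthogonal group. -/
def omegaGroup (f : LinearMap.BilinForm K V) : Subgroup (V ≃ₗ[K] V) :=
  ⁅orthGroup f, orthGroup f⁆

/-- `g` is a product of two involutions lying in the subgroup `H`. -/
def IsBireflectionalIn {G : Type*} [Group G] (H : Subgroup G) (g : G) : Prop :=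
  ∃ σ τ : G, σ ∈ H ∧ τ ∈ H ∧ σ ^ 2 = 1 ∧ τ ^ 2 = 1 ∧ g = σ * τ

/-- `g` is bireflectional in the group `G`. -/
def IsBireflectional {G : Type*} [Group G] (g : G) : Prop :=
  ∃ σ τ : G, σ ^ 2 = 1 ∧ τ ^ 2 = 1 ∧ g = σ * τ

/-- `g` is reversed by some element of `H`. -/
def IsReversibleIn {G : Type*} [Group G] (H : Subgroup G) (g : G) : Prop :=
  ∃ α : G, α ∈ H ∧ α * g * α⁻¹ = g⁻¹

/-- A subspace is invariant under an endomorphism. -/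
def Invt (ψ : V →ₗ[K] V) (U : Submodule K V) : Prop :=
  ∀ x ∈ U, ψ x ∈ U

/-- The discriminant of a (finite-dimensional, nondegenerate) bilinear space is the class
of `d` in `K*/(K*)²`: some Gram determinant equals `d` times a nonzero square. -/
def HasDisc (f : LinearMap.BilinForm K V) (d : K) : Prop :=
  ∃ (b : Basis (Fin (Module.finrank K V)) K V) (c : Kˣ),
    (Matrix.of fun i j => f (b i) (b j)).det = d * (c : K) ^ 2

/-- A nondegenerate symmetric bilinear space is hyperbolic iff its Witt index is half its
dimension, i.e. there is a totally isotropic subspace of half the dimension. -/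
def IsHyperbolicSpace (f : LinearMap.BilinForm K V) : Prop :=
  ∃ W : Submodule K V, (∀ x ∈ W, ∀ y ∈ W, f x y = 0) ∧
    2 * Module.finrank K W = Module.finrank K V

/-- The multiplicity of `p ^ d` as an elementary divisor of `φ`. -/
noncomputable def edMult (φ : Module.End K V) (p : K[X]) (d : ℕ) : ℕ :=
  (2 * Module.finrank K (LinearMap.ker (Polynomial.aeval φ p ^ d))
    - Module.finrank K (LinearMap.ker (Polynomial.aeval φ p ^ (d + 1)))
    - Module.finrank K (LinearMap.ker (Polynomial.aeval φ p ^ (d - 1)))) / p.natDegree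

/-- `n_j(φ)`: the number of elementary divisors `(x ± 1) ^ d` of `φ` with `d ≡ j mod 8`,
counted with multiplicity. -/
noncomputable def nPM [FiniteDimensional K V] (φ : Module.End K V) (j : ℕ) : ℕ :=
  ∑ d ∈ Finset.range (Module.finrank K V + 1),
    if d % 8 = j % 8 then edMult φ (X - 1) d + edMult φ (X + 1) d else 0

/-- The Fitting one space `Bahn^∞(ψ) = ⋂ⱼ im (ψ - 1)^j`. -/
noncomputable def bahnInf (ψ : Module.End K V) : Submodule K V :=
  ⨅ j : ℕ, LinearMap.range ((ψ - 1) ^ j)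

/-- The `K[x]`-submodule generated by `v` (`x` acting as `ψ`). -/
def cycSub (ψ : Module.End K V) (v : V) : Submodule K V :=
  Submodule.span K (Set.range fun n : ℕ => (ψ ^ n) v)

/-- `V` is a cyclic `K[x]`-module, `x` acting as `ψ`. -/
def IsCyclicEnd (ψ : Module.End K V) : Prop :=
  ∃ v : V, cycSub ψ v = ⊤

/-- `V` is a direct sum of two cyclic `K[x]`-submodules, `x` acting as `ψ`. -/
def IsBicyclicEnd (ψ : Module.End K V) : Prop :=
  ∃ v w : V, cycSub ψ v ⊓ cycSub ψ w = ⊥ ∧ cycSub ψ v ⊔ cycSub ψ w = ⊤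

/-- `V` is an indecomposable `K[x]`-module, `x` acting as `ψ`. -/
def ModIndec (ψ : Module.End K V) : Prop :=
  (⊥ : Submodule K V) ≠ ⊤ ∧
    ¬∃ A B : Submodule K V, Invt ψ A ∧ Invt ψ B ∧ A ≠ ⊥ ∧ B ≠ ⊥ ∧ A ⊓ B = ⊥ ∧ A ⊔ B = ⊤

/-- `ψ` is orthogonally indecomposable w.r.t. `f`: `V ≠ 0` and the only nondegenerate
invariant subspaces are `0` and `V`. -/
def OrthIndec (f : LinearMap.BilinForm K V) (ψ : Module.End K V) : Prop :=
  (⊥ : Submodule K V) ≠ ⊤ ∧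
    ∀ U : Submodule K V, Invt ψ U → (f.restrict U).Nondegenerate → U = ⊥ ∨ U = ⊤

/-- The Witt index: the dimension of a maximal totally isotropic subspace. -/
noncomputable def wittIndex (f : LinearMap.BilinForm K V) : ℕ :=
  sSup {n | ∃ W : Submodule K V, (∀ x ∈ W, ∀ y ∈ W, f x y = 0) ∧ Module.finrank K W = n}



/-- Basic data. -/
structure Dat (f : LinearMap.BilinForm K V) (η d s : V →ₗ[K] V) : Prop where
  symm : ∀ x y, f x y = f y x
  nd : ∀ x, (∀ y, f x y = 0) → x = 0
  eta : ∀ x y, f (η x) y = - f x (η y)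
  eta2 : ∀ x, η (η x) = -x
  dsk : ∀ x y, f (d x) y = - f x (d y)
  ssa : ∀ x y, f (s x) y = f x (s y)
  ed : ∀ x, η (d x) = - d (η x)
  es : ∀ x, η (s x) = s (η x)
  ds : ∀ x, d (s x) = s (d x)

/-- Good decomposition of a submodule. -/
def GoodOn (f : LinearMap.BilinForm K V) (η d s : V →ₗ[K] V) (W : Submodule K V) : Prop :=
  ∃ M₁ M₂ : Submodule K V, (M₁ ⊔ M₂) ⊔ (M₁ ⊔ M₂).map η = W ∧
    (∀ x ∈ M₁, ∀ y ∈ M₂, f x y = 0) ∧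
    (∀ x ∈ M₁ ⊔ M₂, ∀ y ∈ M₁ ⊔ M₂, f x (η y) = 0) ∧
    (∀ x ∈ M₁, s x ∈ M₁) ∧ (∀ x ∈ M₂, s x ∈ M₂) ∧
    (∀ x ∈ M₁, d x ∈ M₂) ∧ (∀ x ∈ M₂, d x ∈ M₁)

lemma aeval_comm_app {g s : V →ₗ[K] V} (h : ∀ x, g (s x) = s (g x)) (a : K[X]) (x : V) :
    g (aeval s a x) = aeval s a (g x) := by
  have h1 : Commute g s := LinearMap.ext h
  have h2 : Commute g (aeval s a) := by
    induction a using Polynomial.induction_on' with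
    | add p q hp hq => rw [map_add]; exact hp.add_right hq
    | monomial n c =>
      rw [aeval_monomial]
      exact Commute.mul_right (show Commute g _ from (Algebra.commutes c g).symm) (h1.pow_right n)
  exact LinearMap.congr_fun h2 x

lemma aeval_self {f : LinearMap.BilinForm K V} {s : V →ₗ[K] V}
    (h : ∀ x y, f (s x) y = f x (s y)) (a : K[X]) (x y : V) :
    f (aeval s a x) y = f x (aeval s a y) := by
  induction a using Polynomial.induction_on' with
  | add p q hp hq => simp [hp, hq]
  | monomial n c =>
    have : ∀ n : ℕ, ∀ x y, f ((s ^ n) x) y = f x ((s ^ n) y) := by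
      intro n
      induction n with
      | zero => intro x y; simp
      | succ n ih => intro x y; rw [pow_succ, Module.End.mul_apply, ih, h, ← Module.End.mul_apply, ← pow_succ', pow_succ]
    simp [aeval_monomial, this]

lemma pow_skew {f : LinearMap.BilinForm K V} {d : V →ₗ[K] V}
    (h : ∀ x y, f (d x) y = - f x (d y)) (n : ℕ) (x y : V) :
    f ((d ^ n) x) y = (-1) ^ n * f x ((d ^ n) y) := by
  induction n generalizing x y with
  | zero => simp
  | succ n ih => rw [pow_succ, Module.End.mul_apply, ih, h, ← Module.End.mul_apply, ← pow_succ', pow_succ d]; ring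

lemma Dat.sup_nd {f : LinearMap.BilinForm K V} {A B : Submodule K V}
    (hs : ∀ x y, f x y = f y x)
    (hAB : ∀ x ∈ A, ∀ y ∈ B, f x y = 0)
    (hA : ∀ x ∈ A, (∀ y ∈ A, f x y = 0) → x = 0)
    (hB : ∀ x ∈ B, (∀ y ∈ B, f x y = 0) → x = 0) :
    ∀ x ∈ A ⊔ B, (∀ y ∈ A ⊔ B, f x y = 0) → x = 0 := by
  intro x hx h
  obtain ⟨a, ha, b, hb, rfl⟩ := Submodule.mem_sup.1 hx
  have h1 : a = 0 := hA a ha fun y hy => by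
    have := h y (Submodule.mem_sup_left hy)
    rw [map_add, LinearMap.add_apply, hs b y, hAB y hy b hb, add_zero] at this
    exact this
  have h2 : b = 0 := hB b hb fun y hy => by
    have := h y (Submodule.mem_sup_right hy)
    rw [map_add, LinearMap.add_apply, hAB a ha y hy, zero_add] at this
    exact this
  rw [h1, h2, add_zero]

lemma sup_orth {f : LinearMap.BilinForm K V} {A B C : Submodule K V}
    (h1 : ∀ x ∈ A, ∀ y ∈ C, f x y = 0) (h2 : ∀ x ∈ B, ∀ y ∈ C, f x y = 0) :
    ∀ x ∈ A ⊔ B, ∀ y ∈ C, f x y = 0 := by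
  intro x hx y hy
  obtain ⟨a, ha, b, hb, rfl⟩ := Submodule.mem_sup.1 hx
  simp [h1 a ha y hy, h2 b hb y hy]

lemma sup_inv {g : V →ₗ[K] V} {A B C D : Submodule K V}
    (h1 : ∀ x ∈ A, g x ∈ C) (h2 : ∀ x ∈ B, g x ∈ D) :
    ∀ x ∈ A ⊔ B, g x ∈ C ⊔ D := by
  intro x hx
  obtain ⟨a, ha, b, hb, rfl⟩ := Submodule.mem_sup.1 hx
  rw [map_add]
  exact Submodule.add_mem_sup (h1 a ha) (h2 b hb)

/-- union of good pieces -/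
lemma GoodOn.sup {f : LinearMap.BilinForm K V} {η d s : V →ₗ[K] V} {W W' : Submodule K V}
    (hs : ∀ x y, f x y = f y x) (hη : ∀ x ∈ W, η x ∈ W) (hη' : ∀ x ∈ W', η x ∈ W')
    (ho : ∀ x ∈ W, ∀ y ∈ W', f x y = 0)
    (h : GoodOn f η d s W) (h' : GoodOn f η d s W') : GoodOn f η d s (W ⊔ W') := by
  obtain ⟨M₁, M₂, hW, h12, hh, s1, s2, d1, d2⟩ := h
  obtain ⟨N₁, N₂, hW', k12, kk, t1, t2, e1, e2⟩ := h'
  have m1 : M₁ ≤ W := by rw [← hW]; exact le_sup_left.trans le_sup_left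
  have m2 : M₂ ≤ W := by rw [← hW]; exact le_sup_right.trans le_sup_left
  have n1 : N₁ ≤ W' := by rw [← hW']; exact le_sup_left.trans le_sup_left
  have n2 : N₂ ≤ W' := by rw [← hW']; exact le_sup_right.trans le_sup_left
  have e : (M₁ ⊔ N₁) ⊔ (M₂ ⊔ N₂) = (M₁ ⊔ M₂) ⊔ (N₁ ⊔ N₂) := sup_sup_sup_comm _ _ _ _
  refine ⟨M₁ ⊔ N₁, M₂ ⊔ N₂, ?_, ?_, ?_, sup_inv s1 t1, sup_inv s2 t2, sup_inv d1 e1, sup_inv d2 e2⟩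
  · rw [e, Submodule.map_sup _ (N₁ ⊔ N₂), sup_sup_sup_comm, hW, hW']
  · intro x hx y hy
    obtain ⟨a, ha, b, hb, rfl⟩ := Submodule.mem_sup.1 hx
    obtain ⟨a', ha', b', hb', rfl⟩ := Submodule.mem_sup.1 hy
    simp [h12 a ha a' ha', k12 b hb b' hb', ho a (m1 ha) b' (n2 hb'), hs b a', ho a' (m2 ha') b (n1 hb)]
  · rw [e]
    intro x hx y hy
    obtain ⟨a, ha, b, hb, rfl⟩ := Submodule.mem_sup.1 hx
    obtain ⟨a', ha', b', hb', rfl⟩ := Submodule.mem_sup.1 hy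
    have q1 := sup_le m1 m2 ha
    have q2 := sup_le m1 m2 ha'
    have q3 := sup_le n1 n2 hb
    have q4 := sup_le n1 n2 hb'
    simp [hh a ha a' ha', kk b hb b' hb', ho a q1 _ (hη' _ q4), hs b (η a'), ho _ (hη _ q2) b q3]

/-- transfer from subtype -/
lemma GoodOn.of_sub {f : LinearMap.BilinForm K V} {η d s : V →ₗ[K] V} (W : Submodule K V)
    (hη : ∀ x ∈ W, η x ∈ W) (hd : ∀ x ∈ W, d x ∈ W) (hs : ∀ x ∈ W, s x ∈ W)
    (h : GoodOn (f.restrict W) (η.restrict hη) (d.restrict hd) (s.restrict hs) ⊤) :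
    GoodOn f η d s W := by
  obtain ⟨M₁, M₂, hW, h12, hh, s1, s2, d1, d2⟩ := h
  have key : (M₁ ⊔ M₂).map W.subtype = M₁.map W.subtype ⊔ M₂.map W.subtype := Submodule.map_sup _ _ _
  refine ⟨M₁.map W.subtype, M₂.map W.subtype, ?_, ?_, ?_, ?_, ?_, ?_, ?_⟩
  · rw [← key]
    have : ((M₁ ⊔ M₂).map W.subtype).map η = ((M₁ ⊔ M₂).map (η.restrict hη)).map W.subtype := by
      rw [← Submodule.map_comp, ← Submodule.map_comp]; rfl
    rw [this, ← Submodule.map_sup, hW, Submodule.map_top, Submodule.range_subtype]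
  · rintro _ ⟨x, hx, rfl⟩ _ ⟨y, hy, rfl⟩
    exact h12 x hx y hy
  · rw [← key]
    rintro _ ⟨x, hx, rfl⟩ _ ⟨y, hy, rfl⟩
    exact hh x hx y hy
  · rintro _ ⟨x, hx, rfl⟩; exact ⟨_, s1 x hx, rfl⟩
  · rintro _ ⟨x, hx, rfl⟩; exact ⟨_, s2 x hx, rfl⟩
  · rintro _ ⟨x, hx, rfl⟩; exact ⟨_, d1 x hx, rfl⟩
  · rintro _ ⟨x, hx, rfl⟩; exact ⟨_, d2 x hx, rfl⟩

lemma Dat.sub {f : LinearMap.BilinForm K V} {η d s : V →ₗ[K] V} (D : Dat f η d s) (W : Submodule K V)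
    (hη : ∀ x ∈ W, η x ∈ W) (hd : ∀ x ∈ W, d x ∈ W) (hs : ∀ x ∈ W, s x ∈ W)
    (hn : ∀ x ∈ W, (∀ y ∈ W, f x y = 0) → x = 0) :
    Dat (f.restrict W) (η.restrict hη) (d.restrict hd) (s.restrict hs) where
  symm x y := D.symm x y
  nd x h := Subtype.ext (hn x x.2 fun y hy => h ⟨y, hy⟩)
  eta x y := D.eta x y
  eta2 x := Subtype.ext (D.eta2 x)
  dsk x y := D.dsk x y
  ssa x y := D.ssa x y
  ed x := Subtype.ext (D.ed x)
  es x := Subtype.ext (D.es x)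
  ds x := Subtype.ext (D.ds x)

lemma isCompl_orth [FiniteDimensional K V] {f : LinearMap.BilinForm K V} (hs : ∀ x y, f x y = f y x)
    (W : Submodule K V) (hn : ∀ x ∈ W, (∀ y ∈ W, f x y = 0) → x = 0) :
    IsCompl W (f.orthogonal W) := by
  have hr : f.IsRefl := fun x y h => by rw [hs]; exact h
  rw [LinearMap.BilinForm.isCompl_orthogonal_iff_disjoint hr, Submodule.disjoint_def]
  intro x hx hx'
  exact hn x hx fun y hy => by rw [hs]; exact hx' y hy

/-- The indecomposability assumption. -/
def Indec (f : LinearMap.BilinForm K V) (η d s : V →ₗ[K] V) : Prop :=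
  ∀ W : Submodule K V, (∀ x ∈ W, η x ∈ W) → (∀ x ∈ W, d x ∈ W) → (∀ x ∈ W, s x ∈ W) →
    (∀ x ∈ W, (∀ y ∈ W, f x y = 0) → x = 0) → W = ⊥ ∨ W = ⊤

/-- `K[s] u + d K[s] u'`. -/
noncomputable def EE (d s : V →ₗ[K] V) (u u' : V) : Submodule K V :=
  LinearMap.range (((LinearMap.toSpanSingleton (Module.End K V) V u).restrictScalars K ∘ₗ
      (aeval s : K[X] →ₐ[K] Module.End K V).toLinearMap).coprod
    (d ∘ₗ (LinearMap.toSpanSingleton (Module.End K V) V u').restrictScalars K ∘ₗ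
      (aeval s : K[X] →ₐ[K] Module.End K V).toLinearMap))

lemma mem_EE {d s : V →ₗ[K] V} {u u' x : V} :
    x ∈ EE d s u u' ↔ ∃ a b : K[X], x = aeval s a u + d (aeval s b u') := by
  simp only [EE, LinearMap.mem_range, Prod.exists]
  constructor
  · rintro ⟨a, b, rfl⟩; exact ⟨a, b, by simp⟩
  · rintro ⟨a, b, rfl⟩; exact ⟨a, b, by simp⟩

section frame
variable {f : LinearMap.BilinForm K V} {η d s : V →ₗ[K] V}

lemma self_neg_zero (h2 : (2 : K) ≠ 0) {a : K} (h : a = -a) : a = 0 := by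
  have : 2 * a = 0 := by linear_combination h
  exact (mul_eq_zero.1 this).resolve_left h2

lemma Dat.rel1 (D : Dat f η d s) (u u' : V) (a : K[X]) :
    f u' (aeval s a (η u)) = - f u (aeval s a (η u')) := by
  rw [D.symm, ← aeval_comm_app D.es, D.eta, aeval_self D.ssa]

lemma Dat.rel2 (D : Dat f η d s) (u u' : V) (a : K[X]) :
    f u' (aeval s a (d (η u))) = - f u (aeval s a (d (η u'))) := by
  rw [D.symm, aeval_self D.ssa, D.dsk, D.eta, ← aeval_comm_app D.ds, ← aeval_comm_app D.es, D.ed,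
    aeval_comm_app D.es, aeval_comm_app D.ds]
  simp

lemma Dat.rel3 (D : Dat f η d s) (u u' : V) (a : K[X]) :
    f u' (aeval s a (d u)) = - f u (aeval s a (d u')) := by
  rw [D.symm, aeval_self D.ssa, D.dsk, aeval_comm_app D.ds]

/-- orthogonality relation -/
def Rel (f : LinearMap.BilinForm K V) (η d s : V →ₗ[K] V) (u u' : V) : Prop :=
  (∀ a : K[X], f u (aeval s a (η u')) = 0) ∧ (∀ a : K[X], f u (aeval s a (d (η u'))) = 0)

lemma Dat.rel_self (D : Dat f η d s) (h2 : (2 : K) ≠ 0) (u : V) : Rel f η d s u u :=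
  ⟨fun a => self_neg_zero h2 (D.rel1 u u a), fun a => self_neg_zero h2 (D.rel2 u u a)⟩

lemma Dat.rel_symm (D : Dat f η d s) {u u' : V} (h : Rel f η d s u u') : Rel f η d s u' u :=
  ⟨fun a => by rw [D.rel1, h.1, neg_zero], fun a => by rw [D.rel2, h.2, neg_zero]⟩

lemma aeval_aeval_app (a b : K[X]) (x : V) : aeval s a (aeval s b x) = aeval s (a * b) x := by
  rw [map_mul]; rfl

lemma Dat.rel_orth (D : Dat f η d s) {h : K[X]} (hh : ∀ x, d (d x) = aeval s h x)
    {u u' : V} (r : Rel f η d s u u') :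
    ∀ x ∈ EE d s u u, ∀ y ∈ EE d s u' u', f x (η y) = 0 := by
  intro x hx y hy
  obtain ⟨a, b, rfl⟩ := mem_EE.1 hx
  obtain ⟨a', b', rfl⟩ := mem_EE.1 hy
  have e1 : f (aeval s a u) (aeval s a' (η u')) = 0 := by
    rw [aeval_self D.ssa, aeval_aeval_app, r.1]
  have e2 : f (aeval s a u) (aeval s b' (d (η u'))) = 0 := by
    rw [aeval_self D.ssa, aeval_aeval_app, r.2]
  have e3 : f (aeval s b u) (aeval s a' (d (η u'))) = 0 := by
    rw [aeval_self D.ssa, aeval_aeval_app, r.2]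
  have e4 : f (aeval s b u) (aeval s h (aeval s b' (η u'))) = 0 := by
    rw [aeval_self D.ssa, aeval_aeval_app, aeval_aeval_app, r.1]
  simp only [map_add, LinearMap.add_apply, D.dsk, D.ed, map_neg, hh]
  simp only [aeval_comm_app D.es, aeval_comm_app D.ds, e1, e2, e3, e4]
  simp

lemma Dat.frame (D : Dat f η d s) (h2 : (2 : K) ≠ 0) {h : K[X]} (hh : ∀ x, d (d x) = aeval s h x)
    (v w : V) (r : Rel f η d s v w) (ho : ∀ a : K[X], f v (aeval s a w) = 0) (hv : v ≠ 0)
    (hnd : ∀ x ∈ EE d s v v ⊔ EE d s w w, (∀ y ∈ EE d s v v ⊔ EE d s w w, f x y = 0) → x = 0)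
    (s' : V →ₗ[K] V) (g : K[X]) (hs' : ∀ x, s' x = aeval s g x)
    (ind : Indec f η d s') : GoodOn f η d s' ⊤ := by
  have N : EE d s v w ⊔ EE d s w v = EE d s v v ⊔ EE d s w w := by
    apply le_antisymm
    · refine sup_le ?_ ?_
      · intro x hx
        obtain ⟨a, b, rfl⟩ := mem_EE.1 hx
        exact Submodule.add_mem_sup (mem_EE.2 ⟨a, 0, by simp⟩) (mem_EE.2 ⟨0, b, by simp⟩)
      · intro x hx
        obtain ⟨a, b, rfl⟩ := mem_EE.1 hx
        rw [add_comm]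
        exact Submodule.add_mem_sup (mem_EE.2 ⟨0, b, by simp⟩) (mem_EE.2 ⟨a, 0, by simp⟩)
    · refine sup_le ?_ ?_
      · intro x hx
        obtain ⟨a, b, rfl⟩ := mem_EE.1 hx
        exact Submodule.add_mem_sup (mem_EE.2 ⟨a, 0, by simp⟩) (mem_EE.2 ⟨0, b, by simp⟩)
      · intro x hx
        obtain ⟨a, b, rfl⟩ := mem_EE.1 hx
        rw [add_comm]
        exact Submodule.add_mem_sup (mem_EE.2 ⟨0, b, by simp⟩) (mem_EE.2 ⟨a, 0, by simp⟩)
  have hsE : ∀ u u', ∀ x ∈ EE d s u u', s' x ∈ EE d s u u' := by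
    intro u u' x hx
    obtain ⟨a, b, rfl⟩ := mem_EE.1 hx
    refine mem_EE.2 ⟨g * a, g * b, ?_⟩
    rw [hs', map_add, aeval_aeval_app, ← aeval_comm_app D.ds, aeval_aeval_app]
  have hdE : ∀ u u', ∀ x ∈ EE d s u u', d x ∈ EE d s u' u := by
    intro u u' x hx
    obtain ⟨a, b, rfl⟩ := mem_EE.1 hx
    refine mem_EE.2 ⟨h * b, a, ?_⟩
    rw [map_add, hh, aeval_aeval_app, add_comm]
  have ho' : ∀ a : K[X], f w (aeval s a v) = 0 := fun a => by
    rw [D.symm, aeval_self D.ssa, ho]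
  have horth : ∀ x ∈ EE d s v v ⊔ EE d s w w, ∀ y ∈ EE d s v v ⊔ EE d s w w, f x (η y) = 0 := by
    intro x hx y hy
    obtain ⟨a, ha, b, hb, rfl⟩ := Submodule.mem_sup.1 hx
    obtain ⟨a', ha', b', hb', rfl⟩ := Submodule.mem_sup.1 hy
    simp only [map_add, LinearMap.add_apply, D.rel_orth hh (D.rel_self h2 v) a ha a' ha',
      D.rel_orth hh (D.rel_self h2 w) b hb b' hb', D.rel_orth hh r a ha b' hb',
      D.rel_orth hh (D.rel_symm r) b hb a' ha', add_zero]
  set E := EE d s v v ⊔ EE d s w w with hE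
  have hsN : ∀ x ∈ E, s' x ∈ E := sup_inv (hsE v v) (hsE w w)
  have hdN : ∀ x ∈ E, d x ∈ E := sup_inv (hdE v v) (hdE w w)
  have es' : ∀ x, η (s' x) = s' (η x) := fun x => by rw [hs', hs', aeval_comm_app D.es]
  have hU : E ⊔ E.map η = ⊤ := by
    refine (ind (E ⊔ E.map η) ?_ ?_ ?_ ?_).resolve_left ?_
    · rw [sup_comm]
      have := sup_inv (g := η) (A := E.map η) (B := E) (C := E) (D := E.map η) ?_ ?_
      · intro x hx
        rw [sup_comm]; exact this x hx
      · rintro _ ⟨x, hx, rfl⟩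
        rw [D.eta2]; exact E.neg_mem hx
      · intro x hx; exact ⟨x, hx, rfl⟩
    · refine sup_inv hdN ?_
      rintro _ ⟨x, hx, rfl⟩
      exact ⟨- d x, E.neg_mem (hdN x hx), by simp [D.ed]⟩
    · refine sup_inv hsN ?_
      rintro _ ⟨x, hx, rfl⟩
      exact ⟨s' x, hsN x hx, es' x⟩
    · refine Dat.sup_nd D.symm ?_ hnd ?_
      · rintro x hx _ ⟨y, hy, rfl⟩
        exact horth x hx y hy
      · rintro _ ⟨x, hx, rfl⟩ hy
        rw [hnd x hx ?_, map_zero]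
        intro y hy'
        have := hy _ ⟨y, hy', rfl⟩
        rw [D.eta, D.eta2] at this
        simpa using this
    · intro hb
      apply hv
      have : v ∈ E ⊔ E.map η := Submodule.mem_sup_left
        (Submodule.mem_sup_left (mem_EE.2 ⟨1, 0, by simp⟩))
      rw [hb] at this
      exact this
  refine ⟨EE d s v w, EE d s w v, ?_, ?_, ?_, hsE _ _, hsE _ _, hdE _ _, hdE _ _⟩
  · rw [N, hU]
  · intro x hx y hy
    obtain ⟨a, b, rfl⟩ := mem_EE.1 hx
    obtain ⟨a', b', rfl⟩ := mem_EE.1 hy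
    have e1 : f (aeval s a v) (aeval s a' w) = 0 := by
      rw [aeval_self D.ssa, aeval_aeval_app, ho]
    have e2 : f (aeval s a v) (aeval s b' (d v)) = 0 := by
      rw [aeval_self D.ssa, aeval_aeval_app]; exact self_neg_zero h2 (D.rel3 _ _ _)
    have e3 : f (aeval s b w) (aeval s a' (d w)) = 0 := by
      rw [aeval_self D.ssa, aeval_aeval_app]; exact self_neg_zero h2 (D.rel3 _ _ _)
    have e4 : f (aeval s b w) (aeval s h (aeval s b' v)) = 0 := by
      rw [aeval_self D.ssa, aeval_aeval_app, aeval_aeval_app, ho']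
    simp only [map_add, LinearMap.add_apply, D.dsk, hh]
    simp only [aeval_comm_app D.ds, e1, e2, e3, e4]
    simp
  · rw [N]; exact horth

end frame

section core
variable {f : LinearMap.BilinForm K V} {η d s : V →ₗ[K] V}

lemma exists_diag (hs : ∀ x y, f x y = f y x) (nd : ∀ x, (∀ y, f x y = 0) → x = 0)
    (h2 : (2 : K) ≠ 0) (T : V →ₗ[K] V)
    (hT : ∀ x y, f (T x) y = f x (T y)) (h0 : T ≠ 0) : ∃ v, f v (T v) ≠ 0 := by
  by_contra! h
  apply h0
  ext x
  refine nd _ fun y => ?_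
  have := h (x + y)
  simp only [map_add, LinearMap.add_apply, h] at this
  rw [← hT x y, hs y (T x)] at this
  have h3 : 2 * f (T x) y = 0 := by linear_combination this
  exact (mul_eq_zero.1 h3).resolve_left h2

lemma bez {p c : K[X]} (hp : Irreducible p) (k : ℕ) (hc : ¬ p ^ (k + 1) ∣ c) :
    ∃ t u : K[X], t * c + u * p ^ (k + 1) = p ^ k := by
  have hc0 : c ≠ 0 := fun h => hc (h ▸ dvd_zero _)
  obtain ⟨c', h1, h2⟩ := (FiniteMultiplicity.of_not_isUnit hp.not_isUnit hc0).exists_eq_pow_mul_and_not_dvd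
  set j := multiplicity p c
  have hj : j ≤ k := by
    by_contra! hlt
    exact hc ((pow_dvd_pow p hlt).trans (h1 ▸ dvd_mul_right _ _))
  obtain ⟨a, b, hab⟩ := ((hp.coprime_iff_not_dvd.2 h2).pow_left (m := k + 1)).symm
  refine ⟨a * p ^ (k - j), b * p ^ k, ?_⟩
  have : p ^ k = p ^ (k - j) * p ^ j := by rw [← pow_add]; congr 1; omega
  rw [h1]
  calc a * p ^ (k - j) * (p ^ j * c') + b * p ^ k * p ^ (k + 1)
      = (a * c') * (p ^ (k - j) * p ^ j) + b * p ^ (k + 1) * p ^ k := by ring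
    _ = p ^ k * (a * c' + b * p ^ (k + 1)) := by rw [← this]; ring
    _ = p ^ k := by rw [hab, mul_one]

lemma EE_zero : EE d s 0 0 = ⊥ := by
  rw [eq_bot_iff]
  intro x hx
  obtain ⟨a, b, rfl⟩ := mem_EE.1 hx
  simp

lemma core1 [FiniteDimensional K V] (D : Dat f η d s) (h2 : (2 : K) ≠ 0)
    {h : K[X]} (hh : ∀ x, d (d x) = aeval s h x)
    (p : K[X]) (hp : Irreducible p) (hpm : p ∣ minpoly K s) (hp4 : ¬ p ∣ h)
    (ind : Indec f η d s) : GoodOn f η d s ⊤ := by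
  have hm0 : minpoly K s ≠ 0 := minpoly.ne_zero (Algebra.IsIntegral.isIntegral s)
  obtain ⟨r, h1, hr⟩ := (FiniteMultiplicity.of_not_isUnit hp.not_isUnit hm0).exists_eq_pow_mul_and_not_dvd
  obtain ⟨k, hk⟩ : ∃ k, multiplicity p (minpoly K s) = k + 1 := by
    apply Nat.exists_eq_succ_of_ne_zero
    intro h0
    rw [h0, pow_zero, one_mul] at h1
    exact hr (h1 ▸ hpm)
  rw [hk] at h1
  have hT : aeval s (p ^ k * (r * r)) ≠ 0 := by
    intro h0
    have := minpoly.dvd K s h0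
    rw [h1] at this
    have h3 : (p ^ k * r) * p ∣ (p ^ k * r) * r := by
      convert this using 1 <;> ring
    have hne : p ^ k * r ≠ 0 := by
      refine mul_ne_zero (pow_ne_zero _ hp.ne_zero) ?_
      rintro rfl; exact hr (dvd_zero _)
    exact hr ((mul_dvd_mul_iff_left hne).1 h3)
  obtain ⟨v', hv'⟩ := exists_diag D.symm D.nd h2 _ (aeval_self D.ssa _) hT
  set v := aeval s r v' with hv
  have hv1 : f v (aeval s (p ^ k) v) ≠ 0 := by
    rw [hv, aeval_self D.ssa, aeval_aeval_app, aeval_aeval_app]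
    convert hv' using 4
    ring
  have hv2 : aeval s (p ^ (k + 1)) v = 0 := by
    rw [hv, aeval_aeval_app, ← h1, minpoly.aeval]; rfl
  clear_value v
  have key : ∀ c : K[X], (∀ t : K[X], f v (aeval s (t * c) v) = 0) → aeval s c v = 0 := by
    intro c hc
    by_cases hdv : p ^ (k + 1) ∣ c
    · obtain ⟨e, rfl⟩ := hdv
      rw [mul_comm, ← aeval_aeval_app, hv2, map_zero]
    · exfalso
      obtain ⟨t, u, htu⟩ := bez hp k hdv
      apply hv1
      rw [← htu, map_add, LinearMap.add_apply, map_add, hc, ← aeval_aeval_app, hv2]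
      simp
  have key2 : ∀ c : K[X], aeval s (h * c) v = 0 → aeval s c v = 0 := by
    intro c hc
    obtain ⟨a, b, hab⟩ := ((hp.coprime_iff_not_dvd.2 hp4).pow_left (m := k + 1)).symm
    have : c = a * (h * c) + (b * c) * p ^ (k + 1) := by
      linear_combination (-c) * hab
    rw [this, map_add, LinearMap.add_apply, ← aeval_aeval_app, hc, ← aeval_aeval_app, hv2]
    simp
  refine D.frame h2 hh v 0 ⟨by simp, by simp⟩ (by simp) ?_ ?_ s X (by simp) ind
  · intro h0; rw [h0] at hv1; simp at hv1
  · rw [EE_zero, sup_bot_eq]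
    intro x hx hy
    obtain ⟨a, b, rfl⟩ := mem_EE.1 hx
    have e3 : ∀ c : K[X], f v (aeval s c (d v)) = 0 := fun c => self_neg_zero h2 (D.rel3 _ _ _)
    have ha : aeval s a v = 0 := by
      apply key
      intro t
      have := hy (aeval s t v) (mem_EE.2 ⟨t, 0, by simp⟩)
      rw [D.symm, aeval_self D.ssa, aeval_comm_app D.ds, map_add, map_add, aeval_aeval_app,
        aeval_aeval_app, e3, add_zero] at this
      exact this
    have hb : aeval s b v = 0 := by
      apply key2
      apply key
      intro t
      have := hy (d (aeval s t v)) (mem_EE.2 ⟨0, t, by simp⟩)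
      rw [ha, zero_add, D.symm, D.dsk, hh, neg_eq_zero, aeval_self D.ssa, aeval_aeval_app,
        aeval_aeval_app, mul_assoc] at this
      exact this
    rw [ha, hb]; simp

lemma aeval_sq (a : K[X]) : aeval (d * d) a = aeval d (expand K 2 a) := by
  rw [expand_aeval, pow_two]

lemma EE_poly {v x : V} (hx : x ∈ EE d (d * d) v v) : ∃ P : K[X], x = aeval d P v := by
  obtain ⟨a, b, rfl⟩ := mem_EE.1 hx
  refine ⟨expand K 2 a + X * expand K 2 b, ?_⟩
  rw [aeval_sq, aeval_sq, map_add, map_mul, aeval_X]; rfl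

lemma pow_mem_EE (v : V) (n : ℕ) : (d ^ n) v ∈ EE d (d * d) v v := by
  obtain ⟨j, hj | hj⟩ := Nat.even_or_odd' n
  · refine mem_EE.2 ⟨X ^ j, 0, ?_⟩
    rw [hj, pow_mul, pow_two]; simp
  · refine mem_EE.2 ⟨0, X ^ j, ?_⟩
    rw [hj, pow_succ', pow_mul, pow_two]; simp

lemma nilp_nd (D : Dat f η d s) (m : ℕ) (hm : d ^ (m + 1) = 0) (v w : V)
    (hvw : ∀ α β : K, f (α • v + β • w) ((d ^ m) v) = 0 → f (α • v + β • w) ((d ^ m) w) = 0 →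
      α • v + β • w = 0) :
    ∀ x ∈ EE d (d * d) v v ⊔ EE d (d * d) w w,
      (∀ y ∈ EE d (d * d) v v ⊔ EE d (d * d) w w, f x y = 0) → x = 0 := by
  intro x hx hy
  have claim : ∀ n, n ≤ m + 1 → ∃ P Q : K[X], x = (d ^ n) (aeval d P v + aeval d Q w) := by
    intro n
    induction n with
    | zero =>
      intro _
      obtain ⟨a, ha, b, hb, rfl⟩ := Submodule.mem_sup.1 hx
      obtain ⟨P, rfl⟩ := EE_poly ha
      obtain ⟨Q, rfl⟩ := EE_poly hb
      exact ⟨P, Q, by simp⟩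
    | succ n ih =>
      intro hn
      obtain ⟨P, Q, hPQ⟩ := ih (by omega)
      have dec : ∀ (P : K[X]) (u : V), aeval d P u = (P.coeff 0) • u + d (aeval d P.divX u) := by
        intro P u
        have e : aeval d P u = aeval d (X * P.divX + C (P.coeff 0)) u := by
          rw [mul_comm, divX_mul_X_add]
        rw [e, map_add, map_mul, aeval_X, aeval_C, LinearMap.add_apply, Module.End.mul_apply,
          Module.algebraMap_end_apply, add_comm]
      rw [dec P, dec Q] at hPQ
      have hPQ' : x = (d ^ n) (P.coeff 0 • v + Q.coeff 0 • w) +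
          (d ^ (n + 1)) (aeval d P.divX v + aeval d Q.divX w) := by
        rw [hPQ, pow_succ, Module.End.mul_apply, ← map_add]
        congr 1
        rw [map_add]; abel
      have test : ∀ u, f x ((d ^ (m - n)) u) = 0 →
          f (P.coeff 0 • v + Q.coeff 0 • w) ((d ^ m) u) = 0 := by
        intro u hu
        rw [hPQ', map_add, LinearMap.add_apply, pow_skew D.dsk, pow_skew D.dsk,
          ← Module.End.mul_apply, ← Module.End.mul_apply, ← pow_add, ← pow_add,
          show n + 1 + (m - n) = m + 1 by omega, show n + (m - n) = m by omega, hm] at hu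
        simpa using hu
      have := hvw _ _ (test v (hy _ (Submodule.mem_sup_left (pow_mem_EE v _))))
        (test w (hy _ (Submodule.mem_sup_right (pow_mem_EE w _))))
      rw [this, map_zero, zero_add] at hPQ'
      exact ⟨_, _, hPQ'⟩
  obtain ⟨P, Q, h⟩ := claim (m + 1) le_rfl
  rw [h, hm]; rfl

lemma Dat.sq (D : Dat f η d s) : Dat f η d (d * d) :=
  { D with
    ssa := fun x y => by simp [D.dsk]
    es := fun x => by simp [D.ed]
    ds := fun x => rfl }

lemma indep (D : Dat f η d s) (hK : ∀ a b : K, a ^ 2 + b ^ 2 = 0 → a = 0 ∧ b = 0)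
    (m : ℕ) (hm : d ^ (m + 1) = 0) (v : V) (hv : (d ^ m) v ≠ 0) (P Q : K[X])
    (h : aeval d P v + aeval d Q (η v) = 0) : ∀ n ≤ m + 1, X ^ n ∣ P ∧ X ^ n ∣ Q := by
  intro n
  induction n with
  | zero => intro _; simp
  | succ n ih =>
    intro hn
    obtain ⟨⟨P', hP⟩, ⟨Q', hQ⟩⟩ := ih (by omega)
    have hpow : ∀ n, ∀ x, (d ^ n) (η x) = (-1 : K) ^ n • η ((d ^ n) x) := by
      intro n
      induction n with
      | zero => intro x; simp
      | succ n ih =>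
        intro x
        have : d (η x) = - η (d x) := by rw [D.ed, neg_neg]
        rw [pow_succ, Module.End.mul_apply, this, map_neg, ih, Module.End.mul_apply, pow_succ]
        simp
    have dec : ∀ (P : K[X]) (u : V), (d ^ (m - n)) (aeval d (X ^ n * P) u) = P.coeff 0 • (d ^ m) u := by
      intro P u
      conv_lhs => rw [← divX_mul_X_add P]
      have : X ^ n * (P.divX * X + C (P.coeff 0)) = P.divX * X ^ (n + 1) + C (P.coeff 0) * X ^ n := by ring
      rw [this, map_add, map_mul, map_mul, map_pow, map_pow, aeval_X, aeval_C, LinearMap.add_apply,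
        map_add, Module.End.mul_apply, Module.End.mul_apply, Module.algebraMap_end_apply, map_smul,
        ← Module.End.mul_apply (d ^ (m - n)) (d ^ n), ← pow_add, show m - n + n = m by omega]
      have h0 : (d ^ (m - n)) (aeval d P.divX ((d ^ (n + 1)) u)) = 0 := by
        have e : (d ^ (n + 1)) u = aeval d (X ^ (n + 1) : K[X]) u := by simp
        have e' : d ^ (m - n) = aeval d (X ^ (m - n) : K[X]) := by simp
        rw [e, e', aeval_aeval_app, aeval_aeval_app,
          show (X ^ (m - n) * P.divX * X ^ (n + 1) : K[X]) = P.divX * (X ^ (m - n) * X ^ (n + 1)) by ring,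
          ← pow_add, show m - n + (n + 1) = m + 1 by omega, map_mul, map_pow, aeval_X, hm]
        simp
      rw [h0, zero_add]
    have h1 := congrArg (d ^ (m - n)) h
    rw [map_add, hP, hQ, dec, dec, map_zero, hpow] at h1
    set y := (d ^ m) v
    set α := P'.coeff 0
    set β := Q'.coeff 0
    have h3 : α • y + (β * (-1) ^ m) • η y = 0 := by rw [mul_smul]; exact h1
    have h4 := congrArg η h3
    rw [map_add, map_smul, map_smul, D.eta2, map_zero] at h4
    have h5 : (α ^ 2 + (β * (-1) ^ m) ^ 2) • y = 0 := by
      have e1 := congrArg (fun z => α • z) h3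
      have e2 := congrArg (fun z => (β * (-1) ^ m) • z) h4
      simp only [smul_add, smul_zero, smul_neg] at e1 e2
      have e3 : (α ^ 2 + (β * (-1) ^ m) ^ 2) • y = (α • α • y + α • (β * (-1) ^ m) • η y) -
        ((β * (-1) ^ m) • α • η y + -((β * (-1) ^ m) • (β * (-1) ^ m) • y)) := by module
      rw [e3, e1, e2, sub_zero]
    obtain ⟨ha, hb⟩ := hK _ _ ((smul_eq_zero.1 h5).resolve_right hv)
    have hb : β = 0 := by simpa using hb
    constructor
    · rw [hP, pow_succ]; exact mul_dvd_mul_left _ (X_dvd_iff.2 ha)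
    · rw [hQ, pow_succ]; exact mul_dvd_mul_left _ (X_dvd_iff.2 hb)

lemma exists_sep [FiniteDimensional K V] (nd : ∀ x, (∀ y, f x y = 0) → x = 0)
    (Z : Submodule K V) (x : V) (hx : x ∉ Z) : ∃ w, (∀ z ∈ Z, f w z = 0) ∧ f w x ≠ 0 := by
  obtain ⟨l, hl, hZ⟩ := Submodule.exists_le_ker_of_notMem hx
  have inj : Function.Injective f := by
    rw [injective_iff_map_eq_zero]
    intro a ha
    exact nd a fun y => by rw [ha]; rfl
  have surj : Function.Surjective f :=
    (LinearMap.injective_iff_surjective_of_finrank_eq_finrank (Subspace.dual_finrank_eq).symm).1 inj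
  obtain ⟨w, rfl⟩ := surj l
  exact ⟨w, fun z hz => hZ hz, hl⟩

lemma core2 [FiniteDimensional K V] (D : Dat f η d s) (h2 : (2 : K) ≠ 0)
    (hK : ∀ a b : K, a ^ 2 + b ^ 2 = 0 → a = 0 ∧ b = 0)
    (m : ℕ) (hm : d ^ (m + 1) = 0) (hm' : d ^ m ≠ 0) (g : K[X]) (hg : ∀ x, s x = aeval (d * d) g x)
    (ind : Indec f η d s) : GoodOn f η d s ⊤ := by
  have D' := D.sq
  have hh : ∀ x, d (d x) = aeval (d * d) (X : K[X]) x := fun x => by simp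
  obtain ⟨j, hj | hj⟩ := Nat.even_or_odd' m
  · have hT : ∀ x y, f ((d ^ m) x) y = f x ((d ^ m) y) := fun x y => by
      rw [pow_skew D.dsk, hj, pow_mul]; simp
    obtain ⟨v, hv⟩ := exists_diag D.symm D.nd h2 (d ^ m) hT hm'
    refine D'.frame h2 hh v 0 ⟨by simp, by simp⟩ (by simp) ?_ ?_ s g hg ind
    · rintro rfl; simp at hv
    · apply nilp_nd D m hm
      intro α β h1 _
      simp only [smul_zero, add_zero, map_smul, LinearMap.smul_apply, smul_eq_mul] at h1 ⊢
      rw [(mul_eq_zero.1 h1).resolve_right hv, zero_smul]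
  · obtain ⟨v, hv⟩ : ∃ v, (d ^ m) v ≠ 0 := by
      by_contra! h
      exact hm' (LinearMap.ext h)
    have hsk : ∀ x y, f ((d ^ m) x) y = - f x ((d ^ m) y) := fun x y => by
      rw [pow_skew D.dsk, hj, pow_succ, pow_mul]; simp
    have hZ : (d ^ m) v ∉ EE 0 (d * d) v 0 ⊔ EE 0 d (η v) 0 := by
      intro hz
      obtain ⟨y, hy, z, hz, hyz⟩ := Submodule.mem_sup.1 hz
      obtain ⟨a, a', rfl⟩ := mem_EE.1 hy
      obtain ⟨b, b', rfl⟩ := mem_EE.1 hz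
      simp only [LinearMap.zero_apply, add_zero] at hyz
      have h1 := (indep D hK m hm v hv (expand K 2 a - X ^ m) b (by
        rw [map_sub, LinearMap.sub_apply, ← aeval_sq, map_pow, aeval_X, ← hyz]; abel) (m + 1) le_rfl).1
      have h3 := X_pow_dvd_iff.1 h1 m (by omega)
      rw [coeff_sub, coeff_expand (by norm_num), if_neg (by omega), coeff_X_pow_self] at h3
      simp at h3
    obtain ⟨w, hw, hwv⟩ := exists_sep D.nd _ _ hZ
    have w1 : ∀ a : K[X], f w (aeval (d * d) a v) = 0 := fun a =>
      hw _ (Submodule.mem_sup_left (mem_EE.2 ⟨a, 0, by simp⟩))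
    have w2 : ∀ a : K[X], f w (aeval d a (η v)) = 0 := fun a =>
      hw _ (Submodule.mem_sup_right (mem_EE.2 ⟨a, 0, by simp⟩))
    refine D'.frame h2 hh v w ⟨?_, ?_⟩ ?_ ?_ ?_ s g hg ind
    · intro a
      rw [D'.rel1, aeval_sq, w2, neg_zero]
    · intro a
      have : aeval d (expand K 2 a) (d (η v)) = aeval d (expand K 2 a * X) (η v) := by simp
      rw [D'.rel2, aeval_sq, this, w2, neg_zero]
    · intro a
      rw [← aeval_self D'.ssa, D.symm, w1]
    · rintro rfl; simp at hv
    · apply nilp_nd D m hm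
      intro α β h1 h3
      have hvv : f v ((d ^ m) v) = 0 := by
        apply self_neg_zero h2
        rw [← hsk, D.symm]
      simp only [map_add, LinearMap.add_apply, map_smul, LinearMap.smul_apply, smul_eq_mul, hvv,
        mul_zero, zero_add] at h1 h3
      have hb := (mul_eq_zero.1 h1).resolve_right hwv
      rw [hb, zero_mul, add_zero] at h3
      have ha := (mul_eq_zero.1 h3).resolve_right (by
        intro h0; apply hwv; rw [D.symm, hsk, h0, neg_zero])
      rw [ha, hb]; simp

end core

section main
variable {f : LinearMap.BilinForm K V} {η d s : V →ₗ[K] V}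

lemma fit [FiniteDimensional K V] (D : Dat f η d s) (ind : Indec f η d s) (c : K)
    (hc : ¬ Function.Injective (s - c • (1 : V →ₗ[K] V))) :
    ∃ n : ℕ, (s - c • (1 : V →ₗ[K] V)) ^ n = 0 := by
  set T := s - c • (1 : V →ₗ[K] V) with hT
  have hTa : T = aeval s (X - C c) := by
    rw [map_sub, aeval_X, aeval_C, hT, Algebra.algebraMap_eq_smul_one]
  obtain ⟨n, hn⟩ := ((LinearMap.eventually_isCompl_ker_pow_range_pow T).and
    (Filter.eventually_ge_atTop 1)).exists
  obtain ⟨hcompl, hn1⟩ := hn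
  refine ⟨n, ?_⟩
  have hTn : T ^ n = aeval s ((X - C c) ^ n) := by rw [map_pow, hTa]
  have hcom : ∀ g : V →ₗ[K] V, (∀ x, g (s x) = s (g x)) → ∀ x ∈ LinearMap.ker (T ^ n),
      g x ∈ LinearMap.ker (T ^ n) := by
    intro g hg x hx
    rw [LinearMap.mem_ker] at hx ⊢
    rw [hTn, ← aeval_comm_app hg, ← hTn, hx, map_zero]
  have := ind (LinearMap.ker (T ^ n)) (hcom η D.es) (hcom d D.ds) (hcom s fun _ => rfl) ?_
  · rcases this with h | h
    · exfalso
      apply hc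
      rw [← LinearMap.ker_eq_bot, eq_bot_iff, ← h]
      intro x hx
      obtain ⟨k, rfl⟩ := Nat.exists_eq_succ_of_ne_zero (show n ≠ 0 by omega)
      rw [LinearMap.mem_ker] at hx ⊢
      rw [Nat.succ_eq_add_one, pow_succ, Module.End.mul_apply, hx, map_zero]
    · exact LinearMap.ker_eq_top.1 h
  · intro x hx hy
    apply D.nd
    intro y
    have hy' : y ∈ LinearMap.ker (T ^ n) ⊔ LinearMap.range (T ^ n) := by
      rw [hcompl.sup_eq_top]; trivial
    obtain ⟨a, ha, b, ⟨z, rfl⟩, rfl⟩ := Submodule.mem_sup.1 hy'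
    rw [map_add, hy a ha, zero_add, hTn, ← aeval_self D.ssa, ← hTn, LinearMap.mem_ker.1 hx]
    simp

lemma core [FiniteDimensional K V] (D : Dat f η d s) (h2 : (2 : K) ≠ 0)
    (p : ℕ) [Fact p.Prime] [CharP K p] (hp2 : p ≠ 2)
    (hK : ∀ a b : K, a ^ 2 + b ^ 2 = 0 → a = 0 ∧ b = 0)
    (hh : ∀ x, d (d x) = aeval s (X ^ 2 - C 4 : K[X]) x) [Nontrivial V]
    (ind : Indec f η d s) : GoodOn f η d s ⊤ := by
  have hint : IsIntegral K s := Algebra.IsIntegral.isIntegral s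
  obtain ⟨P, hP, hPm⟩ := WfDvdMonoid.exists_irreducible_factor (minpoly.not_isUnit K s)
    (minpoly.ne_zero hint)
  by_cases hP4 : P ∣ X ^ 2 - C 4
  swap
  · exact core1 D h2 hh P hP hPm hP4 ind
  obtain ⟨c, hc, hPc⟩ : ∃ c : K, c ^ 2 = 4 ∧ P ∣ X - C c := by
    have : (X ^ 2 - C 4 : K[X]) = (X - C 2) * (X - C (-2)) := by
      rw [show (4 : K) = 2 * 2 by norm_num, C_mul, C_neg]; ring
    rw [this] at hP4
    rcases hP.prime.dvd_or_dvd hP4 with h | h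
    · exact ⟨2, by norm_num, h⟩
    · exact ⟨-2, by norm_num, h⟩
  have hc0 : c ≠ 0 := by
    rintro rfl
    apply h2
    have : (2 : K) * 2 = 0 := by linear_combination -hc
    exact mul_self_eq_zero.1 this
  have hroot : (minpoly K s).IsRoot c :=
    dvd_iff_isRoot.1 (((hP.associated_of_dvd (irreducible_X_sub_C c) hPc).symm.dvd).trans hPm)
  have hev := Module.End.hasEigenvalue_of_isRoot hroot
  have hninj : ¬ Function.Injective (s - c • (1 : V →ₗ[K] V)) := by
    intro hinj
    obtain ⟨x, hx⟩ := hev.exists_hasEigenvector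
    apply hx.2
    apply hinj
    simp [hx.apply_eq_smul]
  obtain ⟨n, hn⟩ := fit D ind c hninj
  have hTa : s - c • (1 : V →ₗ[K] V) = aeval s (X - C c) := by
    rw [map_sub, aeval_X, aeval_C, Algebra.algebraMap_eq_smul_one]
  rw [hTa, ← map_pow] at hn
  have hdd : d * d = aeval s (X ^ 2 - C 4 : K[X]) := LinearMap.ext hh
  have hfac : (X ^ 2 - C 4 : K[X]) = (X - C c) * (X + C c) := by
    rw [← hc, C_pow]; ring
  have hnil : IsNilpotent d := by
    refine ⟨2 * n, ?_⟩
    rw [pow_mul, pow_two, hdd, ← map_pow, hfac, mul_pow, map_mul, hn, zero_mul]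
  obtain ⟨m, hm⟩ : ∃ m, nilpotencyClass d = m + 1 :=
    Nat.exists_eq_succ_of_ne_zero (pos_nilpotencyClass_iff.2 hnil).ne'
  obtain ⟨hm1, hm2⟩ := nilpotencyClass_eq_succ_iff.1 hm
  have hpodd : Odd p := (Fact.out : p.Prime).odd_of_ne_two hp2
  obtain ⟨M, hM⟩ : ∃ M, p ^ n + 1 = 2 * M := by
    obtain ⟨M, hM⟩ := (hpodd.pow (n := n)).add_one
    exact ⟨M, by omega⟩
  have hpow : aeval s (X ^ (p ^ n) - C (c ^ (p ^ n)) : K[X]) = 0 := by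
    have : (X ^ (p ^ n) - C (c ^ (p ^ n)) : K[X]) = (X - C c) ^ (p ^ n) := by
      rw [sub_pow_char_pow, C_pow]
    have hle : n ≤ p ^ n := (Nat.lt_pow_self (Fact.out : p.Prime).one_lt).le
    rw [this, ← Nat.sub_add_cancel hle, pow_add, map_mul, hn, mul_zero]
  refine core2 D h2 hK m hm1 hm2 (C ((c ^ (p ^ n))⁻¹) * (X + C 4) ^ M) ?_ ind
  intro x
  have h4 : aeval (d * d) (X + C 4 : K[X]) = aeval s (X ^ 2 : K[X]) := by
    rw [map_add, aeval_X, hdd, aeval_C, ← aeval_C (R := K) s (4 : K), ← map_add]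
    congr 1; ring
  have h5 : aeval s (X ^ (p ^ n + 1) : K[X]) = c ^ (p ^ n) • s := by
    have : (X ^ (p ^ n + 1) : K[X]) = (X ^ (p ^ n) - C (c ^ (p ^ n))) * X + C (c ^ (p ^ n)) * X := by ring
    rw [this, map_add, map_mul, hpow, zero_mul, zero_add, map_mul, aeval_C, aeval_X,
      Algebra.algebraMap_eq_smul_one, smul_mul_assoc, one_mul]
  rw [map_mul, map_pow, h4, ← map_pow, ← pow_mul, ← hM, h5, aeval_C,
    Algebra.algebraMap_eq_smul_one, smul_mul_assoc, one_mul, smul_smul,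
    inv_mul_cancel₀ (pow_ne_zero _ hc0), one_smul]

end main

lemma aeval_sq_app (s : V →ₗ[K] V) (c : K) (y : V) :
    aeval s (X ^ 2 - C c : K[X]) y = s (s y) - c • y := by
  rw [map_sub, map_pow, aeval_X, aeval_C, LinearMap.sub_apply, pow_two, Module.End.mul_apply,
    Module.algebraMap_end_apply]

theorem good_all {K : Type*} [Field K] (h2 : (2 : K) ≠ 0)
    (p : ℕ) [Fact p.Prime] [CharP K p] (hp2 : p ≠ 2)
    (hK : ∀ a b : K, a ^ 2 + b ^ 2 = 0 → a = 0 ∧ b = 0) (n : ℕ) :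
    ∀ (V : Type*) [AddCommGroup V] [Module K V] [FiniteDimensional K V]
      (f : LinearMap.BilinForm K V) (η d s : V →ₗ[K] V), finrank K V = n → Dat f η d s →
      (∀ x, d (d x) = aeval s (X ^ 2 - C 4 : K[X]) x) → GoodOn f η d s ⊤ := by
  induction n using Nat.strong_induction_on with
  | _ n ih =>
  intro V _ _ _ f η d s hV D hh
  by_cases ind : Indec f η d s
  · rcases subsingleton_or_nontrivial V with hsub | hnt
    · refine ⟨⊥, ⊥, Subsingleton.elim _ _, ?_, ?_, ?_, ?_, ?_, ?_⟩ <;> simp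
    · exact core D h2 p hp2 hK hh ind
  · unfold Indec at ind
    push Not at ind
    obtain ⟨W, w1, w2, w3, hn, hb, ht⟩ := ind
    have hc := isCompl_orth D.symm W hn
    set W' := f.orthogonal W with hW'
    have orth : ∀ x ∈ W, ∀ y ∈ W', f x y = 0 := fun x hx y hy => hy x hx
    have w1' : ∀ x ∈ W', η x ∈ W' := fun x hx y hy => by
      have := orth _ (w1 y hy) x hx
      rw [D.eta, neg_eq_zero] at this; exact this
    have w2' : ∀ x ∈ W', d x ∈ W' := fun x hx y hy => by
      have := orth _ (w2 y hy) x hx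
      rw [D.dsk, neg_eq_zero] at this; exact this
    have w3' : ∀ x ∈ W', s x ∈ W' := fun x hx y hy => by
      have := orth _ (w3 y hy) x hx
      rw [D.ssa] at this; exact this
    have hn' : ∀ x ∈ W', (∀ y ∈ W', f x y = 0) → x = 0 := by
      intro x hx hy
      apply D.nd
      intro y
      have hy' : y ∈ W ⊔ W' := by rw [hc.sup_eq_top]; trivial
      obtain ⟨a, ha, b, hb, rfl⟩ := Submodule.mem_sup.1 hy'
      rw [map_add, D.symm x a, orth a ha x hx, hy b hb, add_zero]
    have hdim := Submodule.finrank_add_eq_of_isCompl hc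
    have l1 : finrank K W < n := hV ▸ Submodule.finrank_lt ht
    have l2 : finrank K W' < n := by
      have : 0 < finrank K W := by
        rw [Nat.pos_iff_ne_zero, Ne, Submodule.finrank_eq_zero]; exact hb
      omega
    have hsub : ∀ (U : Submodule K V) (u2 : ∀ x ∈ U, d x ∈ U) (u3 : ∀ x ∈ U, s x ∈ U), ∀ x,
        d.restrict u2 (d.restrict u2 x) = aeval (s.restrict u3) (X ^ 2 - C 4 : K[X]) x := by
      intro U u2 u3 x
      apply Subtype.ext
      have := hh x
      rw [aeval_sq_app] at this ⊢
      exact this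
    have g1 := GoodOn.of_sub W w1 w2 w3 (ih _ l1 W _ _ _ _ rfl (D.sub W w1 w2 w3 hn) (hsub W w2 w3))
    have g2 := GoodOn.of_sub W' w1' w2' w3'
      (ih _ l2 W' _ _ _ _ rfl (D.sub W' w1' w2' w3' hn') (hsub W' w2' w3'))
    rw [← hc.sup_eq_top]
    exact GoodOn.sup D.symm w1 w1' orth g1 g2

/-- The involution attached to an orthogonal decomposition. -/
lemma exists_invol (f : LinearMap.BilinForm K V) (hs : ∀ x y, f x y = f y x)
    (nd : ∀ x, (∀ y, f x y = 0) → x = 0) (A B : Submodule K V) (hAB : A ⊔ B = ⊤)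
    (ho : ∀ x ∈ A, ∀ y ∈ B, f x y = 0) :
    ∃ g : V ≃ₗ[K] V, g ∈ orthGroup f ∧ (∀ x, g (g x) = x) ∧ (∀ x ∈ A, g x = x) ∧ ∀ x ∈ B, g x = -x := by
  have hc : IsCompl A B := by
    refine ⟨?_, codisjoint_iff.2 hAB⟩
    rw [Submodule.disjoint_def]
    intro x hx hx'
    apply nd
    intro y
    have hy : y ∈ A ⊔ B := by rw [hAB]; trivial
    obtain ⟨a, ha, b, hb, rfl⟩ := Submodule.mem_sup.1 hy
    rw [map_add, hs x a, ho a ha x hx', ho x hx b hb, add_zero]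
  have hc1 : ∀ x ∈ A, A.projection B hc x = x := fun x hx => Submodule.projection_apply_of_mem_left hc hx
  have hc2 : ∀ x ∈ B, A.projection B hc x = 0 := fun x hx => Submodule.projection_apply_of_mem_right hc hx
  set g0 : V →ₗ[K] V := 2 • A.projection B hc - 1 with hg0
  have gA : ∀ x ∈ A, g0 x = x := fun x hx => by simp [hg0, hc1 x hx, two_smul]
  have gB : ∀ x ∈ B, g0 x = -x := fun x hx => by simp [hg0, hc2 x hx]
  have dec : ∀ x : V, ∃ a ∈ A, ∃ b ∈ B, a + b = x := fun x =>
    Submodule.mem_sup.1 (by rw [hAB]; trivial)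
  have gg : ∀ x, g0 (g0 x) = x := by
    intro x
    obtain ⟨a, ha, b, hb, rfl⟩ := dec x
    simp [gA a ha, gB b hb]
  refine ⟨LinearEquiv.ofInvolutive g0 gg, ?_, gg, gA, gB⟩
  intro x y
  change f (g0 x) (g0 y) = f x y
  obtain ⟨a, ha, b, hb, rfl⟩ := dec x
  obtain ⟨a', ha', b', hb', rfl⟩ := dec y
  simp [gA a ha, gB b hb, gA a' ha', gB b' hb', ho a ha b' hb', hs b a', ho a' ha' b hb]

lemma eq_of_sup {W : Type*} [AddCommGroup W] [Module K W] {A B : Submodule K V} (hAB : A ⊔ B = ⊤)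
    (g h : V →ₗ[K] W)
    (h1 : ∀ x ∈ A, g x = h x) (h2 : ∀ x ∈ B, g x = h x) : ∀ x, g x = h x := by
  intro x
  obtain ⟨a, ha, b, hb, rfl⟩ := Submodule.mem_sup.1 (show x ∈ A ⊔ B by rw [hAB]; trivial)
  rw [map_add, map_add, h1 a ha, h2 b hb]


lemma final {f : LinearMap.BilinForm K V} {η d s : V →ₗ[K] V} (D : Dat f η d s)
    (h2 : (2 : K) ≠ 0) (hG : GoodOn f η d s ⊤) :
    ∃ σ : V ≃ₗ[K] V, σ ∈ omegaGroup f ∧ (∀ x, σ (σ x) = x) ∧ (∀ x, σ (s x) = s (σ x)) ∧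
      ∀ x, σ (d x) = - d (σ x) := by
  obtain ⟨M₁, M₂, hT, h12, hN, s1, s2, d1, d2⟩ := hG
  have m1 : ∀ x ∈ M₁, x ∈ M₁ ⊔ M₂ := fun x hx => Submodule.mem_sup_left hx
  have m2 : ∀ x ∈ M₂, x ∈ M₁ ⊔ M₂ := fun x hx => Submodule.mem_sup_right hx
  have gen : ∀ g h : V →ₗ[K] V, (∀ x ∈ M₁, g x = h x) → (∀ x ∈ M₁, g (η x) = h (η x)) →
      (∀ x ∈ M₂, g x = h x) → (∀ x ∈ M₂, g (η x) = h (η x)) → ∀ x, g x = h x := by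
    intro g h a1 a2 a3 a4
    refine eq_of_sup hT g h ?_ ?_
    · intro x hx
      obtain ⟨a, ha, b, hb, rfl⟩ := Submodule.mem_sup.1 hx
      rw [map_add, map_add, a1 a ha, a3 b hb]
    · rintro _ ⟨x, hx, rfl⟩
      obtain ⟨a, ha, b, hb, rfl⟩ := Submodule.mem_sup.1 hx
      rw [map_add, map_add, map_add, a2 a ha, a4 b hb]
  have hee : ∀ x y, f (η x) (η y) = f x y := fun x y => by
    rw [D.eta, D.eta2, map_neg, neg_neg]
  have o1 : ∀ x ∈ M₁, ∀ y ∈ M₂, f x (η y) = 0 := fun x hx y hy => hN x (m1 x hx) y (m2 y hy)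
  have o2 : ∀ x ∈ M₁, ∀ y ∈ M₂, f (η x) y = 0 := fun x hx y hy => by
    rw [D.eta, o1 x hx y hy, neg_zero]
  have hPQ : (M₁ ⊔ M₁.map η) ⊔ (M₂ ⊔ M₂.map η) = ⊤ := by
    rw [← hT, Submodule.map_sup, sup_sup_sup_comm]
  have hPo : ∀ x ∈ M₁ ⊔ M₁.map η, ∀ y ∈ M₂ ⊔ M₂.map η, f x y = 0 := by
    intro x hx y hy
    obtain ⟨a, ha, _, ⟨b, hb, rfl⟩, rfl⟩ := Submodule.mem_sup.1 hx
    obtain ⟨a', ha', _, ⟨b', hb', rfl⟩, rfl⟩ := Submodule.mem_sup.1 hy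
    simp [h12 a ha a' ha', o1 a ha b' hb', o2 b hb a' ha', hee, h12 b hb b' hb']
  obtain ⟨σ, σO, σσ, σP, σQ⟩ := exists_invol f D.symm D.nd _ _ hPQ hPo
  obtain ⟨g, gO, -, gA, gB⟩ := exists_invol f D.symm D.nd _ _ hT (by
    rintro x hx _ ⟨y, hy, rfl⟩
    exact hN x hx y hy)
  have σ1 : ∀ x ∈ M₁, σ x = x := fun x hx => σP x (Submodule.mem_sup_left hx)
  have σ1' : ∀ x ∈ M₁, σ (η x) = η x := fun x hx => σP _ (Submodule.mem_sup_right ⟨x, hx, rfl⟩)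
  have σ2 : ∀ x ∈ M₂, σ x = -x := fun x hx => σQ x (Submodule.mem_sup_left hx)
  have σ2' : ∀ x ∈ M₂, σ (η x) = -η x := fun x hx => σQ _ (Submodule.mem_sup_right ⟨x, hx, rfl⟩)
  have g1 : ∀ x ∈ M₁, g x = x := fun x hx => gA x (m1 x hx)
  have g2 : ∀ x ∈ M₂, g x = x := fun x hx => gA x (m2 x hx)
  have g1' : ∀ x ∈ M₁, g (η x) = -η x := fun x hx => gB _ ⟨x, m1 x hx, rfl⟩
  have g2' : ∀ x ∈ M₂, g (η x) = -η x := fun x hx => gB _ ⟨x, m2 x hx, rfl⟩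
  have ed' : ∀ x, d (η x) = - η (d x) := fun x => by rw [D.ed, neg_neg]
  refine ⟨σ, ?_, σσ, ?_, ?_⟩
  · have key : ∀ e : V →ₗ[K] V, ∃ J : V →ₗ[K] V, (∀ x ∈ M₁ ⊔ M₁.map η, J x = x) ∧
        ∀ x ∈ M₂ ⊔ M₂.map η, J x = e x := by
      intro e
      refine ⟨(2 : K)⁻¹ • ((1 + (σ : V →ₗ[K] V)) + e ∘ₗ (1 - (σ : V →ₗ[K] V))), ?_, ?_⟩
      · intro x hx
        have : (2 : K)⁻¹ • (x + x) = x := by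
          rw [← two_smul K x, smul_smul, inv_mul_cancel₀ h2, one_smul]
        simpa [σP x hx] using this
      · intro x hx
        have : (2 : K)⁻¹ • (e x + e x) = e x := by
          rw [← two_smul K (e x), smul_smul, inv_mul_cancel₀ h2, one_smul]
        simpa [σQ x hx] using this
    obtain ⟨J, JP, JQ⟩ := key η
    obtain ⟨J', JP', JQ'⟩ := key (-η)
    have ηQ : ∀ x ∈ M₂ ⊔ M₂.map η, η x ∈ M₂ ⊔ M₂.map η := by
      intro x hx
      obtain ⟨a, ha, _, ⟨b, hb, rfl⟩, rfl⟩ := Submodule.mem_sup.1 hx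
      rw [map_add, D.eta2, add_comm]
      exact Submodule.add_mem_sup (M₂.neg_mem hb) ⟨a, ha, rfl⟩
    have JJ : ∀ x, J (J' x) = x := by
      refine eq_of_sup hPQ (J ∘ₗ J') LinearMap.id ?_ ?_
      · intro x hx; simp [JP' x hx, JP x hx]
      · intro x hx; simp [JQ' x hx, JQ _ (ηQ x hx), D.eta2]
    have JJ' : ∀ x, J' (J x) = x := by
      refine eq_of_sup hPQ (J' ∘ₗ J) LinearMap.id ?_ ?_
      · intro x hx; simp [JP' x hx, JP x hx]
      · intro x hx; simp [JQ x hx, JQ' _ (ηQ x hx), D.eta2]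
    let Je : V ≃ₗ[K] V := LinearEquiv.ofLinearMap J J' (LinearMap.ext JJ) (LinearMap.ext JJ')
    have JO : Je ∈ orthGroup f := by
      intro x y
      change f (J x) (J y) = f x y
      obtain ⟨a, ha, b, hb, rfl⟩ := Submodule.mem_sup.1
        (show x ∈ (M₁ ⊔ M₁.map η) ⊔ (M₂ ⊔ M₂.map η) by rw [hPQ]; trivial)
      obtain ⟨a', ha', b', hb', rfl⟩ := Submodule.mem_sup.1
        (show y ∈ (M₁ ⊔ M₁.map η) ⊔ (M₂ ⊔ M₂.map η) by rw [hPQ]; trivial)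
      simp only [map_add, LinearMap.add_apply, JP a ha, JP a' ha', JQ b hb, JQ b' hb', hee,
        hPo a ha b' hb', hPo a ha _ (ηQ b' hb'), D.symm b a', D.symm (η b) a', hPo a' ha' b hb,
        hPo a' ha' _ (ηQ b hb)]
    have J1 : ∀ x ∈ M₁, J x = x := fun x hx => JP x (Submodule.mem_sup_left hx)
    have J1' : ∀ x ∈ M₁, J (η x) = η x := fun x hx => JP _ (Submodule.mem_sup_right ⟨x, hx, rfl⟩)
    have J2 : ∀ x ∈ M₂, J x = η x := fun x hx => JQ x (Submodule.mem_sup_left hx)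
    have J2' : ∀ x ∈ M₂, J (η x) = -x := fun x hx => by
      rw [JQ _ (Submodule.mem_sup_right ⟨x, hx, rfl⟩), D.eta2]
    have hcom : ∀ x, J (g x) = σ (g (J x)) := by
      refine gen (J ∘ₗ (g : V →ₗ[K] V)) ((σ : V →ₗ[K] V) ∘ₗ (g : V →ₗ[K] V) ∘ₗ J) ?_ ?_ ?_ ?_
      · intro x hx; simp [g1 x hx, J1 x hx, σ1 x hx]
      · intro x hx; simp [g1' x hx, J1' x hx, σ1' x hx]
      · intro x hx; simp [g2 x hx, J2 x hx, g2' x hx, σ2' x hx]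
      · intro x hx; simp [g2' x hx, J2' x hx, g2 x hx, σ2 x hx]
    have : σ = Je * g * Je⁻¹ * g⁻¹ := by
      rw [eq_mul_inv_iff_mul_eq, eq_mul_inv_iff_mul_eq]
      exact LinearEquiv.ext fun x => (hcom x).symm
    rw [this]
    exact Subgroup.commutator_mem_commutator JO gO
  · refine gen ((σ : V →ₗ[K] V) ∘ₗ s) (s ∘ₗ (σ : V →ₗ[K] V)) ?_ ?_ ?_ ?_
    · intro x hx; simp [σ1 x hx, σ1 _ (s1 x hx)]
    · intro x hx; simp [σ1' x hx, ← D.es, σ1' _ (s1 x hx)]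
    · intro x hx; simp [σ2 x hx, σ2 _ (s2 x hx)]
    · intro x hx; simp [σ2' x hx, ← D.es, σ2' _ (s2 x hx)]
  · refine gen ((σ : V →ₗ[K] V) ∘ₗ d) (- (d ∘ₗ (σ : V →ₗ[K] V))) ?_ ?_ ?_ ?_
    · intro x hx; simp [σ1 x hx, σ2 _ (d1 x hx)]
    · intro x hx; simp [σ1' x hx, ed', σ2' _ (d1 x hx)]
    · intro x hx; simp [σ2 x hx, σ1 _ (d2 x hx)]
    · intro x hx; simp [σ2' x hx, ed', σ1' _ (d2 x hx)]

/-- For `K = GF(q)`, `q ≡ 3 (mod 4)`: if `φ ∈ Ω(V)` is reversed by some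
`η ∈ O(V)` with `η² = -id`, then `φ` is bireflectional in `Ω(V)`. -/
theorem stmt7 [Fintype K] {q : ℕ} (hq : Fintype.card K = q) (h3 : q % 4 = 3)
    [FiniteDimensional K V]
    (f : LinearMap.BilinForm K V) (hsymm : f.IsSymm) (hnd : f.Nondegenerate)
    (φ : V ≃ₗ[K] V) (hφ : φ ∈ omegaGroup f)
    (η : V ≃ₗ[K] V) (hη : η ∈ orthGroup f) (hη2 : ∀ v : V, η (η v) = -v)
    (hrev : η * φ * η⁻¹ = φ⁻¹) :
    IsBireflectionalIn (omegaGroup f) φ := by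

  subst hq
  have hm1 : ¬ IsSquare (-1 : K) := by
    rw [FiniteField.isSquare_neg_one_iff]; simp [h3]
  have hK : ∀ a b : K, a ^ 2 + b ^ 2 = 0 → a = 0 ∧ b = 0 := by
    intro a b hab
    by_cases hb : b = 0
    · subst hb
      simpa using hab
    · exfalso
      apply hm1
      refine ⟨a / b, ?_⟩
      field_simp
      linear_combination -hab
  have h2 : (2 : K) ≠ 0 := by
    intro h
    have := (hK 1 1 (by linear_combination h)).1
    exact one_ne_zero this
  obtain ⟨p, hp⟩ := CharP.exists K
  have : Fact p.Prime := ⟨CharP.char_is_prime K p⟩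
  have hp2 : p ≠ 2 := by
    rintro rfl
    exact h2 (by exact_mod_cast CharP.cast_eq_zero K 2)
  have hφO : ∀ x y, f (φ x) (φ y) = f x y :=
    Subgroup.commutator_le_self (orthGroup f) hφ
  have hr : η * φ = φ⁻¹ * η := mul_inv_eq_iff_eq_mul.1 hrev
  have r1 : ∀ x, η (φ x) = φ.symm (η x) := fun x => LinearEquiv.congr_fun hr x
  have r2 : ∀ x, η (φ.symm x) = φ (η x) := fun x => by
    have := r1 (φ.symm x)
    rw [φ.apply_symm_apply] at this
    rw [this, φ.apply_symm_apply]
  have a1 : ∀ x y, f (φ x) y = f x (φ.symm y) := fun x y => by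
    rw [← hφO x, φ.apply_symm_apply]
  have a2 : ∀ x y, f (φ.symm x) y = f x (φ y) := fun x y => by
    rw [← hφO _ y, φ.apply_symm_apply]
  have D : Dat f (η : V →ₗ[K] V) ((φ : V →ₗ[K] V) - (φ.symm : V →ₗ[K] V))
      ((φ : V →ₗ[K] V) + (φ.symm : V →ₗ[K] V)) := by
    refine ⟨fun x y => hsymm.eq x y, hnd.1, ?_, fun x => hη2 x, ?_, ?_, ?_, ?_, ?_⟩
    · intro x y
      have := hη x (η y)
      rw [hη2, map_neg] at this
      rw [LinearEquiv.coe_coe, ← this, neg_neg]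
    · intro x y; simp [a1, a2]
    · intro x y; simp [a1, a2, add_comm]
    · intro x; simp [r1, r2]
    · intro x; simp [r1, r2, add_comm]
    · intro x; simp; abel
  have hG := good_all h2 p hp2 hK _ V f _ _ _ rfl D (by
    intro x
    rw [aeval_sq_app, show (4 : K) = ((4 : ℕ) : K) by norm_num, Nat.cast_smul_eq_nsmul]
    simp
    abel)
  obtain ⟨σ, σΩ, σσ, hs, hd⟩ := final D h2 hG
  have key : ∀ x, σ (φ x) = φ.symm (σ x) := by
    intro x
    have h := hs x
    have h' := hd x
    simp only [LinearMap.add_apply, LinearMap.sub_apply, LinearEquiv.coe_coe, map_add, map_sub] at h h'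
    have h3 : (2 : K) • σ (φ x) = (2 : K) • φ.symm (σ x) := by
      rw [two_smul, two_smul]
      calc σ (φ x) + σ (φ x) = (σ (φ x) + σ (φ.symm x)) + (σ (φ x) - σ (φ.symm x)) := by abel
        _ = φ.symm (σ x) + φ.symm (σ x) := by rw [h, h']; abel
    exact smul_right_injective V h2 h3
  refine ⟨σ, σ * φ, σΩ, mul_mem σΩ hφ, ?_, ?_, ?_⟩
  · rw [pow_two]; exact LinearEquiv.ext σσ
  · rw [pow_two]
    refine LinearEquiv.ext fun x => ?_
    change σ (φ (σ (φ x))) = x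
    rw [key x, φ.apply_symm_apply, σσ]
  · exact LinearEquiv.ext fun x => (σσ (φ x)).symm

end Biref
end

section
/- Let (V, f) be a finite-dimensional nondegenerate symmetric bilinear space over a field K with char K ≠ 2, and let φ ∈ O(V) be orthogonally indecomposable, indecomposable as a K[x]-module (x acting as φ), with minimal polynomial (x − 1)^{dim V}, and dim V ≥ 3. Then Fix(φ) ⊆ Bahn(φ), f induces a nondegenerate symmetric bilinear form on the quotient Bahn(φ)/Fix(φ), and disc V = −disc(Bahn(φ)/Fix(φ)) in K*/(K*)². -/
open Polynomial Module

namespace Biref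

variable {K V : Type*} [Field K] [AddCommGroup V] [Module K V]

theorem gram_change {ι : Type*} [Fintype ι] [DecidableEq ι] (f : LinearMap.BilinForm K V)
    (b b' : Basis ι K V) : ∃ c : Kˣ,
    (Matrix.of fun i j => f (b' i) (b' j)).det =
      (Matrix.of fun i j => f (b i) (b j)).det * (c : K) ^ 2 := by
  have h := LinearMap.BilinForm.toMatrix_mul_basis_toMatrix b b' f
  have hu : IsUnit (b.toMatrix b').det := by
    have := congrArg Matrix.det (b.toMatrix_mul_toMatrix_flip b')
    rw [Matrix.det_mul, Matrix.det_one] at this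
    exact IsUnit.of_mul_eq_one _ this
  obtain ⟨c, hc⟩ := hu
  refine ⟨c, ?_⟩
  have e1 : (Matrix.of fun i j => f (b' i) (b' j)) = LinearMap.BilinForm.toMatrix b' f := by
    ext i j; simp [LinearMap.BilinForm.toMatrix_apply]
  have e2 : (Matrix.of fun i j => f (b i) (b j)) = LinearMap.BilinForm.toMatrix b f := by
    ext i j; simp [LinearMap.BilinForm.toMatrix_apply]
  rw [e1, e2, ← h, Matrix.det_mul, Matrix.det_mul, Matrix.det_transpose, hc]
  ring

theorem hasDisc_iff [FiniteDimensional K V] {n : ℕ} (f : LinearMap.BilinForm K V)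
    (b : Basis (Fin n) K V) (d : K) : HasDisc f d ↔ ∃ c : Kˣ,
    (Matrix.of fun i j => f (b i) (b j)).det = d * (c : K) ^ 2 := by
  have hn : n = Module.finrank K V := by simpa using (Module.finrank_eq_card_basis b).symm
  subst hn
  constructor
  · rintro ⟨b', c, h⟩
    obtain ⟨c', h'⟩ := gram_change f b' b
    refine ⟨c * c', ?_⟩
    rw [h', h]; push_cast; ring
  · rintro ⟨c, h⟩
    exact ⟨b, c, h⟩

theorem gram_det {m : ℕ} (f : LinearMap.BilinForm K V) (hs : f.IsSymm) (e e' : V) (b : Fin m → V)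
    (h0 : f e e = 0) (hb : ∀ i, f e (b i) = 0) :
    (Matrix.of fun i j => f ((Fin.cons e (Fin.cons e' b) : Fin (m+2) → V) i)
      ((Fin.cons e (Fin.cons e' b) : Fin (m+2) → V) j)).det =
    - (f e e') ^ 2 * (Matrix.of fun i j => f (b i) (b j)).det := by
  have hb' : ∀ i, f (b i) e = 0 := fun i => by rw [← hb i]; exact hs.eq _ _
  have he' : f e' e = f e e' := hs.eq _ _
  set M := (Matrix.of fun i j => f ((Fin.cons e (Fin.cons e' b) : Fin (m+2) → V) i)
      ((Fin.cons e (Fin.cons e' b) : Fin (m+2) → V) j)) with hM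
  have h2 : ∀ j : Fin m, (0 : Fin (m+1)).succ.succAbove j.succ = j.succ.succ := by
    intro j; rw [Fin.succ_succAbove_succ, Fin.zero_succAbove]
  have h3 : (0 : Fin (m+1)).succ.succAbove 0 = 0 := Fin.succ_succAbove_zero 0
  have m00 : M 0 0 = 0 := h0
  have m01 : M 0 (Fin.succ 0) = f e e' := rfl
  have m0 : ∀ i : Fin m, M 0 i.succ.succ = 0 := hb
  have hsub : (M.submatrix Fin.succ (Fin.succ 0 : Fin (m+2)).succAbove).det =
      f e e' * (Matrix.of fun i j => f (b i) (b j)).det := by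
    rw [Matrix.det_succ_column_zero, Fin.sum_univ_succ, Finset.sum_eq_zero, add_zero]
    · have q : ((M.submatrix Fin.succ (Fin.succ 0 : Fin (m+2)).succAbove).submatrix
          (Fin.succAbove 0) Fin.succ) = (Matrix.of fun i j => f (b i) (b j)) := by
        ext i j
        simp only [Matrix.submatrix_apply, h2, Fin.zero_succAbove]
        rfl
      have q2 : (M.submatrix Fin.succ (Fin.succ 0 : Fin (m+2)).succAbove) 0 0 = f e e' := by
        rw [Matrix.submatrix_apply, h3, ← he']; rfl
      rw [q, q2]; simp
    · intro i _
      have q2 : (M.submatrix Fin.succ (Fin.succ 0 : Fin (m+2)).succAbove) i.succ 0 = 0 := by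
        rw [Matrix.submatrix_apply, h3, ← hb' i]; rfl
      rw [q2]; ring
  rw [Matrix.det_succ_row_zero, Fin.sum_univ_succ, Fin.sum_univ_succ, Finset.sum_eq_zero,
    hsub, m00, m01]
  · simp; ring
  · intro i _
    rw [m0]; ring

theorem finrank_range_of_nilp [FiniteDimensional K V] (N : Module.End K V) (n : ℕ)
    (h : N ^ n = 0) (h' : N ^ (n-1) ≠ 0) (hn : n = Module.finrank K V) (h1 : 1 ≤ n) :
    Module.finrank K (LinearMap.range N) + 1 = n := by
  have key : ∀ k, k < n → Module.finrank K (LinearMap.range (N ^ (k+1))) <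
      Module.finrank K (LinearMap.range (N ^ k)) := by
    intro k hk
    have hle : LinearMap.range (N ^ (k+1)) ≤ LinearMap.range (N ^ k) := by
      rw [pow_succ]; exact LinearMap.range_comp_le_range _ _
    apply Submodule.finrank_lt_finrank_of_lt
    refine lt_of_le_of_ne hle fun heq => h' ?_
    have e1 : LinearMap.range (N ^ (n-1)) = LinearMap.range (N ^ n) := by
      have a1 : N ^ (n-1) = (N ^ (n-1-k)) * N ^ k := by rw [← pow_add]; congr 1; omega
      have a2 : N ^ n = (N ^ (n-1-k)) * N ^ (k+1) := by rw [← pow_add]; congr 1; omega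
      rw [a1, a2, Module.End.mul_eq_comp, Module.End.mul_eq_comp, LinearMap.range_comp,
        LinearMap.range_comp, heq]
    rw [h, LinearMap.range_zero] at e1
    exact LinearMap.range_eq_bot.1 e1
  have low : ∀ j, j < n → j + 1 ≤ Module.finrank K (LinearMap.range (N ^ (n-1-j))) := by
    intro j
    induction j with
    | zero =>
      intro _
      have := key (n-1) (by omega)
      simp only [Nat.sub_zero]
      omega
    | succ j ih =>
      intro hj
      have a := ih (by omega)
      have b := key (n-1-(j+1)) (by omega)
      rw [show n-1-(j+1)+1 = n-1-j by omega] at b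
      omega
  have k0 := key 0 (by omega)
  have hr : Module.finrank K (LinearMap.range (N ^ 0)) = n := by
    rw [pow_zero, Module.End.one_eq_id, LinearMap.range_id, finrank_top, hn]
  rw [hr, zero_add, pow_one] at k0
  rcases Nat.lt_or_ge n 2 with h2 | h2
  · omega
  · have := low (n-2) (by omega)
    rw [show n-1-(n-2) = 1 by omega, pow_one] at this
    omega

theorem linInd_of_gram {m : ℕ} (f : LinearMap.BilinForm K V) (w : Fin m → V)
    (h : (Matrix.of fun i j => f (w i) (w j)).det ≠ 0) : LinearIndependent K w := by
  rw [Fintype.linearIndependent_iff]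
  intro c hc
  have : (Matrix.of fun i j => f (w i) (w j)).mulVec c = 0 := by
    ext i
    have := congrArg (f (w i)) hc
    simp only [map_sum, map_smul, smul_eq_mul, map_zero] at this
    simp only [Matrix.mulVec, dotProduct, Matrix.of_apply, Pi.zero_apply]
    rw [← this]
    exact Finset.sum_congr rfl fun _ _ => mul_comm _ _
  intro i
  exact congrFun (Matrix.eq_zero_of_mulVec_eq_zero h this) i

/-- If `φ ∈ O(V)` is orthogonally indecomposable, indecomposable as a
`K[x]`-module, with minimal polynomial `(x-1)^{dim V}` and `dim V ≥ 3`, then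
`Fix(φ) ⊆ Bahn(φ)`, `f` induces a nondegenerate symmetric form on `Bahn(φ)/Fix(φ)`, and
`disc V = -disc (Bahn(φ)/Fix(φ))`. -/
theorem stmt9 [FiniteDimensional K V] (hK : ringChar K ≠ 2)
    (f : LinearMap.BilinForm K V) (hsymm : f.IsSymm) (hnd : f.Nondegenerate)
    (φ : V ≃ₗ[K] V) (hφ : φ ∈ orthGroup f)
    (hoi : OrthIndec f (φ : V →ₗ[K] V)) (hmi : ModIndec (φ : V →ₗ[K] V))
    (hmin : minpoly K (φ : V →ₗ[K] V) = (X - 1) ^ Module.finrank K V)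
    (hdim : 3 ≤ Module.finrank K V) :
    LinearMap.ker ((φ : V →ₗ[K] V) - 1) ≤ LinearMap.range ((φ : V →ₗ[K] V) - 1) ∧
      ∃ g : LinearMap.BilinForm K
          (↥(LinearMap.range ((φ : V →ₗ[K] V) - 1)) ⧸
            (LinearMap.ker ((φ : V →ₗ[K] V) - 1)).comap
              (LinearMap.range ((φ : V →ₗ[K] V) - 1)).subtype),
        (∀ x y : ↥(LinearMap.range ((φ : V →ₗ[K] V) - 1)),
          g (Submodule.Quotient.mk x) (Submodule.Quotient.mk y) = f (x : V) (y : V)) ∧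
        g.IsSymm ∧ g.Nondegenerate ∧
        (∀ d : K, HasDisc g d ↔ HasDisc f (-d)) := by
  set N : Module.End K V := (φ : V →ₗ[K] V) - 1 with hN
  have hNapp : ∀ x, N x = φ x - x := fun x => rfl
  have hpow : N ^ Module.finrank K V = 0 := by
    have := minpoly.aeval K (φ : V →ₗ[K] V)
    rw [hmin] at this
    simpa using this
  have hpow' : N ^ (Module.finrank K V - 1) ≠ 0 := by
    intro h0
    have h1 : Polynomial.aeval (φ : V →ₗ[K] V) ((X - 1 : K[X]) ^ (Module.finrank K V - 1)) = 0 := by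
      simpa using h0
    have hm : ((X - 1 : K[X]) ^ (Module.finrank K V - 1)).Monic := by
      have : (X - 1 : K[X]).Monic := by simpa using monic_X_sub_C (1 : K)
      exact this.pow _
    have h2 := minpoly.min K (φ : V →ₗ[K] V) hm h1
    have hX : (X - 1 : K[X]).degree = 1 := by simpa using degree_X_sub_C (1 : K)
    rw [hmin, degree_pow, degree_pow, hX] at h2
    simp only [nsmul_eq_mul, mul_one] at h2
    have h3 : Module.finrank K V ≤ Module.finrank K V - 1 := by exact_mod_cast h2
    omega
  have hrk := finrank_range_of_nilp N _ hpow hpow' rfl (by omega)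
  have hrn := LinearMap.finrank_range_add_finrank_ker N
  have hker1 : Module.finrank K (LinearMap.ker N) = 1 := by omega
  have hperp : ∀ x ∈ LinearMap.ker N, ∀ y ∈ LinearMap.range N, f x y = 0 := by
    rintro x hx _ ⟨y, rfl⟩
    have hx' : φ x = x := by rw [LinearMap.mem_ker, hNapp, sub_eq_zero] at hx; exact hx
    rw [hNapp, map_sub, sub_eq_zero]
    conv_lhs => rw [← hx']
    exact hφ x y
  have hperp2 : ∀ x, (∀ y ∈ LinearMap.range N, f x y = 0) → x ∈ LinearMap.ker N := by
    intro x h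
    rw [LinearMap.mem_ker]
    apply hnd.1
    intro y
    obtain ⟨z, rfl⟩ := φ.surjective y
    have h1 := h (N z) ⟨z, rfl⟩
    rw [hNapp, map_sub, sub_eq_zero] at h1
    rw [hNapp, map_sub, LinearMap.sub_apply, h1, hφ x z, sub_self]
  obtain ⟨v, hv⟩ : ∃ v, (N ^ (Module.finrank K V - 1)) v ≠ 0 := by
    by_contra! hc
    exact hpow' (LinearMap.ext hc)
  set e := (N ^ (Module.finrank K V - 1)) v with he
  have heker : e ∈ LinearMap.ker N := by
    rw [LinearMap.mem_ker, he, ← Module.End.mul_apply, ← pow_succ',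
      Nat.sub_add_cancel (by omega), hpow]; rfl
  have heran : e ∈ LinearMap.range N := by
    refine ⟨(N ^ (Module.finrank K V - 2)) v, ?_⟩
    rw [he, ← Module.End.mul_apply, ← pow_succ']
    congr 2; omega
  have hle : LinearMap.ker N ≤ LinearMap.range N := by
    intro x hx
    obtain ⟨c, hc⟩ := (finrank_eq_one_iff_of_nonzero' (⟨e, heker⟩ : LinearMap.ker N)
      (by simpa using hv)).1 hker1 ⟨x, hx⟩
    have : c • e = x := congrArg Subtype.val hc
    rw [← this]
    exact Submodule.smul_mem _ _ heran
  refine ⟨hle, ?_⟩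
  set B := LinearMap.range N with hB
  set P := (LinearMap.ker N).comap B.subtype with hP
  have hmemP : ∀ x : B, x ∈ P ↔ (x : V) ∈ LinearMap.ker N := fun x => Iff.rfl
  let g : LinearMap.BilinForm K (B ⧸ P) := P.liftQ
    { toFun := fun x => P.liftQ (f.restrict B x) (by
        intro y hy
        rw [LinearMap.mem_ker]
        have := hperp y hy x x.2
        rw [← hsymm.eq] at this
        exact this)
      map_add' := by
        intro x y
        apply Submodule.linearMap_qext
        ext z; simp
      map_smul' := by
        intro c x
        apply Submodule.linearMap_qext
        ext z; simp } (by
        intro x hx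
        rw [LinearMap.mem_ker]
        apply Submodule.linearMap_qext
        ext z
        exact hperp x hx z z.2)
  have hg : ∀ x y : B, g (Submodule.Quotient.mk x) (Submodule.Quotient.mk y) = f (x : V) (y : V) :=
    fun x y => rfl
  have hgs : g.IsSymm := ⟨by
    intro x y
    obtain ⟨x, rfl⟩ := Submodule.Quotient.mk_surjective _ x
    obtain ⟨y, rfl⟩ := Submodule.Quotient.mk_surjective _ y
    exact hsymm.eq _ _⟩
  have hgl : g.SeparatingLeft := by
    intro x h
    obtain ⟨x, rfl⟩ := Submodule.Quotient.mk_surjective _ x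
    rw [Submodule.Quotient.mk_eq_zero, hmemP]
    apply hperp2
    intro y hy
    exact h (Submodule.Quotient.mk ⟨y, hy⟩)
  have hgn : g.Nondegenerate := LinearMap.BilinForm.Nondegenerate.ofSeparatingLeft hgl
  refine ⟨g, hg, hgs, hgn, ?_⟩
  intro d
  have hPf : Module.finrank K P = 1 := by
    rw [← hker1]; exact (Submodule.comapSubtypeEquivOfLe hle).finrank_eq
  have hQ := Submodule.finrank_quotient_add_finrank P
  let bq := Module.finBasis K (B ⧸ P)
  choose b hb using fun i => Submodule.Quotient.mk_surjective P (bq i)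
  obtain ⟨e', he'⟩ : ∃ e', f e e' ≠ 0 := by
    by_contra! hc
    exact hv (hnd.1 e hc)
  have hG : (Matrix.of fun i j => f (b i : V) (b j : V)) =
      Matrix.of fun i j => g (bq i) (bq j) := by
    ext i j
    simp only [Matrix.of_apply]
    rw [← hb i, ← hb j]; rfl
  have hGd : (Matrix.of fun i j => g (bq i) (bq j)).det ≠ 0 := by
    have := (LinearMap.BilinForm.nondegenerate_iff_det_ne_zero bq).1 hgn
    convert this using 2
    ext i j; simp [LinearMap.BilinForm.toMatrix_apply]
  have hdet := gram_det f hsymm e e' (fun i => (b i : V)) (hperp e heker e heran)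
    (fun i => hperp e heker _ (b i).2)
  rw [hG] at hdet
  have hli := linInd_of_gram f _ (by
    rw [hdet]
    exact mul_ne_zero (neg_ne_zero.2 (pow_ne_zero _ he')) hGd)
  let bV := basisOfLinearIndependentOfCardEqFinrank hli (by rw [Fintype.card_fin]; omega)
  have hbV : ⇑bV = (Fin.cons e (Fin.cons e' fun i => (b i : V))) :=
    coe_basisOfLinearIndependentOfCardEqFinrank _ _
  rw [hasDisc_iff g bq, hasDisc_iff f bV, hbV, hdet]
  constructor
  · rintro ⟨c, hc⟩
    refine ⟨Units.mk0 _ he' * c, ?_⟩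
    rw [hc]; push_cast; rw [Units.val_mk0]; ring
  · rintro ⟨c, hc⟩
    refine ⟨(Units.mk0 _ he')⁻¹ * c, ?_⟩
    push_cast; rw [Units.val_mk0]
    field_simp
    linear_combination -hc

end Biref
end

section
/- Let (V, f) be a finite-dimensional nondegenerate symmetric bilinear space over a field K with char K ≠ 2, and let φ ∈ O(V). Then the centralizer of φ in O(V) is contained in SO(V) if and only if V has no nonzero nondegenerate φ-invariant subspace of odd dimension. -/
open Polynomial Module

namespace Biref

variable {K V : Type*} [Field K] [AddCommGroup V] [Module K V]

lemma det_eq_one_of_isom [FiniteDimensional K V] (B : LinearMap.BilinForm K V)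
    (hB : B.Nondegenerate) (g : V →ₗ[K] V) (hg : ∀ x y, B (g x) (g y) = B x y)
    (hk : LinearMap.det (g + 1) ≠ 0) : LinearMap.det g = 1 := by
  classical
  let b := Module.finBasis K V
  have hA : (LinearMap.BilinForm.toMatrix b B).det ≠ 0 :=
    (LinearMap.BilinForm.nondegenerate_iff_det_ne_zero b).1 hB
  have h1 : B.comp (g + 1) g = B.compRight (g + 1) := by
    ext x y
    simp [hg, add_comm]
  have h2 : (LinearMap.BilinForm.toMatrix b (B.comp (g + 1) g)).det =
      (LinearMap.BilinForm.toMatrix b (B.compRight (g + 1))).det := by rw [h1]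
  simp only [LinearMap.BilinForm.toMatrix_comp b b, LinearMap.BilinForm.toMatrix_compRight,
    Matrix.det_mul, Matrix.det_transpose, LinearMap.det_toMatrix] at h2
  have h3 : ((LinearMap.BilinForm.toMatrix b B).det * LinearMap.det (g + 1)) * LinearMap.det g
      = ((LinearMap.BilinForm.toMatrix b B).det * LinearMap.det (g + 1)) * 1 := by
    linear_combination h2
  exact mul_left_cancel₀ (mul_ne_zero hA hk) h3

lemma det_isCompl [FiniteDimensional K V] {U W : Submodule K V} (h : IsCompl U W)
    (g : V →ₗ[K] V) (hU : ∀ x ∈ U, g x ∈ U) (hW : ∀ x ∈ W, g x ∈ W) :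
    LinearMap.det g = LinearMap.det (g.restrict hU) * LinearMap.det (g.restrict hW) := by
  rw [← LinearMap.det_prodMap, ← LinearMap.det_conj _ (Submodule.prodEquivOfIsCompl U W h)]
  congr 1
  ext x
  obtain ⟨⟨u, w⟩, rfl⟩ := (Submodule.prodEquivOfIsCompl U W h).surjective x
  simp

lemma nondeg_of_compl {U W : Submodule K V} (h : IsCompl U W)
    (f : LinearMap.BilinForm K V) (hs : f.IsSymm) (hnd : f.Nondegenerate)
    (ho : ∀ x ∈ U, ∀ y ∈ W, f x y = 0) : (f.restrict U).Nondegenerate := by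
  apply f.nondegenerate_restrict_of_disjoint_orthogonal hs.isRefl
  rw [Submodule.disjoint_def]
  intro x hx hx'
  apply hnd.1 x
  intro y
  obtain ⟨u, hu, w, hw, rfl⟩ := Submodule.mem_sup.1
    (show y ∈ U ⊔ W by rw [h.sup_eq_top]; trivial)
  rw [map_add, ho x hx w hw, add_zero]
  exact hs.isRefl _ _ (hx' u hu)

lemma det_neg_unip [FiniteDimensional K V] (g : V →ₗ[K] V) (n : ℕ)
    (hg : (g + 1) ^ n = 0) : LinearMap.det g = (-1) ^ Module.finrank K V := by
  have h : IsNilpotent (g + 1 : Module.End K V) := ⟨n, hg⟩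
  have h1 := h.charpoly_eq_X_pow_finrank
  have h2 := congrArg (Polynomial.eval 1) h1
  rw [LinearMap.eval_charpoly] at h2
  have h3 : (algebraMap K (Module.End K V) 1 - (g + 1)) = (-1 : K) • g := by
    rw [map_one]; ext x; simp
  rw [h3, LinearMap.det_smul] at h2
  simp only [eval_pow, eval_X, one_pow] at h2
  have h4 : ((-1 : K) ^ Module.finrank K V) * (-1) ^ Module.finrank K V = 1 := by
    rw [← mul_pow]; simp
  calc LinearMap.det g = ((-1 : K) ^ Module.finrank K V * (-1) ^ Module.finrank K V)
        * LinearMap.det g := by rw [h4, one_mul]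
    _ = _ := by rw [mul_assoc, h2, mul_one]

lemma orth_fitting (f : LinearMap.BilinForm K V) (ξ : V ≃ₗ[K] V)
    (hξ : ∀ x y, f (ξ x) (ξ y) = f x y) (n : ℕ) :
    ∀ x y, f (((ξ : V →ₗ[K] V) + 1) ^ n • x) (((ξ : V →ₗ[K] V) ^ n) y)
      = f x ((((ξ : V →ₗ[K] V) + 1) ^ n) y) := by
  induction n with
  | zero => intro x y; simp
  | succ n ih =>
    intro x y
    have e : ∀ u v, f (((ξ : V →ₗ[K] V) + 1) u) (ξ v) = f u (((ξ : V →ₗ[K] V) + 1) v) := by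
      intro u v; simp [hξ, add_comm]
    have c : (ξ : V →ₗ[K] V) * ((ξ : V →ₗ[K] V) + 1) ^ n
        = ((ξ : V →ₗ[K] V) + 1) ^ n * (ξ : V →ₗ[K] V) :=
      (((Commute.refl (ξ : V →ₗ[K] V)).add_right (Commute.one_right _)).pow_right n).eq
    have c' := LinearMap.congr_fun c y
    simp only [Module.End.mul_apply] at c'
    have := ih (((ξ : V →ₗ[K] V) + 1) x) (ξ y)
    simp only [Module.End.smul_def] at this ⊢
    rw [pow_succ, pow_succ, Module.End.mul_apply, Module.End.mul_apply]
    rw [LinearEquiv.coe_coe, this, ← LinearEquiv.coe_coe, ← c', LinearEquiv.coe_coe, e,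
      ← Module.End.mul_apply, ← pow_succ', pow_succ]

/-- The centralizer of `φ` in `O(V)` is contained in `SO(V)` iff `V` has no
nonzero nondegenerate `φ`-invariant subspace of odd dimension. -/
theorem stmt10 [FiniteDimensional K V] (hK : ringChar K ≠ 2)
    (f : LinearMap.BilinForm K V) (hsymm : f.IsSymm) (hnd : f.Nondegenerate)
    (φ : V ≃ₗ[K] V) (hφ : φ ∈ orthGroup f) :
    (∀ ξ : V ≃ₗ[K] V, ξ ∈ orthGroup f → ξ * φ = φ * ξ →
        LinearMap.det (ξ : V →ₗ[K] V) = 1) ↔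
      ¬∃ U : Submodule K V, U ≠ ⊥ ∧ Invt (φ : V →ₗ[K] V) U ∧
        (f.restrict U).Nondegenerate ∧ Odd (Module.finrank K U) := by
  constructor
  · rintro h ⟨U, -, hinv, hUnd, hodd⟩
    have hc := LinearMap.BilinForm.isCompl_orthogonal_of_restrict_nondegenerate
      hsymm.isRefl hUnd
    set W := f.orthogonal U with hW
    have hUW : ∀ u ∈ U, ∀ w ∈ W, f u w = 0 := fun u hu w hw => hw u hu
    have hWU : ∀ u ∈ U, ∀ w ∈ W, f w u = 0 := fun u hu w hw => hsymm.isRefl _ _ (hw u hu)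
    have hφU : ∀ u ∈ U, ∃ u' ∈ U, φ u' = u := by
      intro u hu
      have hm : U.map (φ : V →ₗ[K] V) = U := by
        apply Submodule.eq_of_le_of_finrank_eq
        · rintro _ ⟨x, hx, rfl⟩; exact hinv x hx
        · exact LinearEquiv.finrank_map_eq φ U
      rw [← hm] at hu
      exact hu
    have hinvW : ∀ w ∈ W, φ w ∈ W := by
      intro w hw u hu
      obtain ⟨u', hu', rfl⟩ := hφU u hu
      exact (hφ u' w).trans (hUW u' hu' w hw)
    let e := Submodule.prodEquivOfIsCompl U W hc
    let ξ : V ≃ₗ[K] V := e.symm ≪≫ₗ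
      (LinearEquiv.prodCongr (LinearEquiv.neg K) (LinearEquiv.refl K W)) ≪≫ₗ e
    have hξ : ∀ (u : U) (w : W), ξ (u + w) = -u + w := by
      intro u w
      have : ((u : V) + w) = e (u, w) := by simp [e]
      rw [this]
      simp [ξ]
      simp [e]
    have hdec : ∀ x : V, ∃ (u : U) (w : W), x = u + w := by
      intro x
      obtain ⟨⟨u, w⟩, rfl⟩ := e.surjective x
      exact ⟨u, w, by simp [e]⟩
    have hU1 : ∀ x ∈ U, ξ x = -x := by
      intro x hx; simpa using hξ ⟨x, hx⟩ 0
    have hW1 : ∀ x ∈ W, ξ x = x := by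
      intro x hx; simpa using hξ 0 ⟨x, hx⟩
    have hd := h ξ ?_ ?_
    · have hUi : ∀ x ∈ U, (ξ : V →ₗ[K] V) x ∈ U := by
        intro x hx; rw [LinearEquiv.coe_coe, hU1 x hx]; exact U.neg_mem hx
      have hWi : ∀ x ∈ W, (ξ : V →ₗ[K] V) x ∈ W := by
        intro x hx; rw [LinearEquiv.coe_coe, hW1 x hx]; exact hx
      rw [det_isCompl hc _ hUi hWi] at hd
      have r1 : (ξ : V →ₗ[K] V).restrict hUi = (-1 : K) • LinearMap.id := by
        ext x; simp [hU1 x x.2]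
      have r2 : (ξ : V →ₗ[K] V).restrict hWi = LinearMap.id := by
        ext x; simp [hW1 x x.2]
      rw [r1, r2, LinearMap.det_smul, LinearMap.det_id, LinearMap.det_id, hodd.neg_one_pow] at hd
      simp only [mul_one] at hd
      exact Ring.neg_one_ne_one_of_char_ne_two hK hd
    · intro x y
      obtain ⟨u, w, rfl⟩ := hdec x
      obtain ⟨u', w', rfl⟩ := hdec y
      rw [hξ, hξ]
      simp [hUW u u.2 w' w'.2, hWU u' u'.2 w w.2]
    · ext x
      obtain ⟨u, w, rfl⟩ := hdec x
      show ξ (φ (u + w)) = φ (ξ (u + w))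
      rw [hξ, map_add, map_add, map_add, map_neg, hU1 (φ u) (hinv u u.2), hW1 _ (hinvW w w.2)]
  · intro hno ξ hξ hcomm
    by_contra hdet
    apply hno
    have hev := ((ξ : V →ₗ[K] V) + 1).eventually_isCompl_ker_pow_range_pow
    obtain ⟨n, hc, hn⟩ := (hev.and (Filter.eventually_ge_atTop 1)).exists
    set g : Module.End K V := (ξ : V →ₗ[K] V) with hg
    set N : Module.End K V := (g + 1) ^ n with hN
    set U := LinearMap.ker N with hU
    set W := LinearMap.range N with hW
    have cgN : Commute g N := ((Commute.refl g).add_right (Commute.one_right _)).pow_right n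
    have hUg : ∀ x ∈ U, g x ∈ U := by
      intro x hx
      have := LinearMap.congr_fun cgN.eq x
      simp only [Module.End.mul_apply] at this
      rw [hU, LinearMap.mem_ker] at hx ⊢
      rw [← this, hx, map_zero]
    have hWg : ∀ x ∈ W, g x ∈ W := by
      rintro _ ⟨y, rfl⟩
      exact ⟨g y, (LinearMap.congr_fun cgN.eq y).symm⟩
    have ho : ∀ x ∈ U, ∀ y ∈ W, f x y = 0 := by
      rintro x hx _ ⟨y, rfl⟩
      have := orth_fitting f ξ hξ n x y
      rw [← this]
      have h0 : N x = 0 := hx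
      show f (N x) _ = 0
      rw [h0]; simp
    have hUnd := nondeg_of_compl hc f hsymm hnd ho
    have hWnd := nondeg_of_compl hc.symm f hsymm hnd
      (fun x hx y hy => hsymm.isRefl _ _ (ho y hy x hx))
    have hd := det_isCompl hc g hUg hWg
    have d1 : LinearMap.det (g.restrict hUg) = (-1) ^ Module.finrank K U := by
      apply det_neg_unip _ n
      have hU' : ∀ x ∈ U, (g + 1) x ∈ U := fun x hx => U.add_mem (hUg x hx) hx
      have : g.restrict hUg + 1 = (g + 1).restrict hU' := by ext x; simp
      rw [this, Module.End.pow_restrict]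
      ext x
      have : N x = 0 := x.2
      simpa using this
    have d2 : LinearMap.det (g.restrict hWg) = 1 := by
      apply det_eq_one_of_isom (f.restrict W) hWnd
      · intro x y; exact hξ x y
      · intro h0
        have := LinearMap.bot_lt_ker_of_det_eq_zero h0
        apply this.ne'
        rw [eq_bot_iff]
        intro x hx
        have hx0 : (g + 1) (x : V) = 0 := by
          have := congrArg Subtype.val (LinearMap.mem_ker.1 hx)
          simpa using this
        have hxU : (x : V) ∈ U := by
          rw [hU, LinearMap.mem_ker, hN]
          obtain ⟨m, rfl⟩ : ∃ m, n = m + 1 := ⟨n - 1, by omega⟩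
          rw [pow_succ, Module.End.mul_apply, hx0, map_zero]
        have := (Submodule.disjoint_def.1 hc.disjoint) x hxU x.2
        exact Subtype.ext this
    rw [d1, d2, mul_one] at hd
    have hodd : Odd (Module.finrank K U) := by
      by_contra hev
      rw [Nat.not_odd_iff_even] at hev
      rw [hev.neg_one_pow] at hd
      exact hdet hd
    refine ⟨U, ?_, ?_, hUnd, hodd⟩
    · intro hb
      rw [hb] at hodd
      simp at hodd
    · have c1 : Commute (φ : Module.End K V) g := by
        ext x
        exact (LinearMap.congr_fun (congrArg (fun a : V ≃ₗ[K] V => (a : V →ₗ[K] V)) hcomm) x).symm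
      have c2 : Commute (φ : Module.End K V) N := (c1.add_right (Commute.one_right _)).pow_right n
      intro x hx
      have := LinearMap.congr_fun c2.eq x
      simp only [Module.End.mul_apply] at this
      rw [hU, LinearMap.mem_ker] at hx ⊢
      exact this.symm.trans (by rw [hx, map_zero])

end Biref
end

section
/- Let (V, f) be a finite-dimensional nondegenerate symmetric bilinear space over a field K with char K ≠ 2, and let φ ∈ SO(V) with αφα⁻¹ = φ⁻¹ for some α ∈ SO(V). Then φ = στ for some involutions σ, τ ∈ SO(V). -/
open Polynomial Module

namespace Biref

variable {K V : Type*} [Field K] [AddCommGroup V] [Module K V]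

/-- `σ` is an involutive isometry intertwining `P` and `Q`. -/
def Good (f : LinearMap.BilinForm K V) (P Q σ : V →ₗ[K] V) : Prop :=
  (∀ x, σ (σ x) = x) ∧ (∀ x y, f (σ x) (σ y) = f x y) ∧ ∀ x, σ (P x) = Q (σ x)

lemma compl_det [FiniteDimensional K V] {U W : Submodule K V} (hc : IsCompl U W)
    (σ : V →ₗ[K] V) (σ1 : U →ₗ[K] U) (σ2 : W →ₗ[K] W)
    (h1 : ∀ x : U, σ x = σ1 x) (h2 : ∀ x : W, σ x = σ2 x) :
    LinearMap.det σ = LinearMap.det σ1 * LinearMap.det σ2 := by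
  rw [← LinearMap.det_prodMap, ← LinearMap.det_conj (σ1.prodMap σ2)
    (Submodule.prodEquivOfIsCompl U W hc)]
  congr 1
  ext x
  obtain ⟨⟨u, w⟩, rfl⟩ := (Submodule.prodEquivOfIsCompl U W hc).surjective x
  simp [h1, h2]

lemma glue [FiniteDimensional K V] {f : LinearMap.BilinForm K V} (hs : ∀ x y, f x y = f y x)
    {U W : Submodule K V} (hc : IsCompl U W) (ho : ∀ u ∈ U, ∀ w ∈ W, f u w = 0)
    (P Q : V →ₗ[K] V) (hPU : ∀ x ∈ U, P x ∈ U) (hPW : ∀ x ∈ W, P x ∈ W)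
    (hQU : ∀ x ∈ U, Q x ∈ U) (hQW : ∀ x ∈ W, Q x ∈ W)
    (σ1 : U →ₗ[K] U) (σ2 : W →ₗ[K] W)
    (h1 : Good (f.restrict U) (P.restrict hPU) (Q.restrict hQU) σ1)
    (h2 : Good (f.restrict W) (P.restrict hPW) (Q.restrict hQW) σ2) :
    ∃ σ : V →ₗ[K] V, Good f P Q σ ∧
      LinearMap.det σ = LinearMap.det σ1 * LinearMap.det σ2 := by
  let σ : V →ₗ[K] V := LinearMap.ofIsCompl hc (U.subtype ∘ₗ σ1) (W.subtype ∘ₗ σ2)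
  have e1 : ∀ x : U, σ x = σ1 x := fun x => by simp [σ]
  have e2 : ∀ x : W, σ x = σ2 x := fun x => by simp [σ]
  have hdec : ∀ x : V, ∃ (u : U) (w : W), x = u + w := by
    intro x
    obtain ⟨⟨u, w⟩, rfl⟩ := (Submodule.prodEquivOfIsCompl U W hc).surjective x
    exact ⟨u, w, by simp⟩
  obtain ⟨i1, j1, k1⟩ := h1
  obtain ⟨i2, j2, k2⟩ := h2
  refine ⟨σ, ⟨?_, ?_, ?_⟩, compl_det hc σ σ1 σ2 e1 e2⟩
  · intro x
    obtain ⟨u, w, rfl⟩ := hdec x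
    rw [map_add, e1, e2, map_add, e1, e2, i1, i2]
  · intro x y
    obtain ⟨u, w, rfl⟩ := hdec x
    obtain ⟨u', w', rfl⟩ := hdec y
    have a1 : f (σ1 u) (σ1 u') = f u u' := j1 u u'
    have a2 : f (σ2 w) (σ2 w') = f w w' := j2 w w'
    have ho' : ∀ (w : W) (u : U), f w u = 0 := fun w u => by
      rw [hs]; exact ho _ u.2 _ w.2
    have ho2 : ∀ (u : U) (w : W), f u w = 0 := fun u w => ho _ u.2 _ w.2
    simp [e1, e2, a1, a2, ho', ho2]
  · intro x
    obtain ⟨u, w, rfl⟩ := hdec x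
    have a1 : σ (P u) = Q (σ1 u) := by
      rw [show P u = ((P.restrict hPU u : U) : V) from rfl, e1, k1]; rfl
    have a2 : σ (P w) = Q (σ2 w) := by
      rw [show P w = ((P.restrict hPW w : W) : V) from rfl, e2, k2]; rfl
    simp [e1, e2, a1, a2]

lemma restrict_nd {f : LinearMap.BilinForm K V}
    (hn : ∀ x, (∀ y, f x y = 0) → x = 0)
    {U W : Submodule K V} (hc : IsCompl U W) (ho : ∀ u ∈ U, ∀ w ∈ W, f u w = 0) :
    ∀ x : U, (∀ y : U, f.restrict U x y = 0) → x = 0 := by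
  intro x hx
  apply Subtype.ext
  apply hn
  intro y
  obtain ⟨⟨u, w⟩, rfl⟩ := (Submodule.prodEquivOfIsCompl U W hc).surjective y
  have := hx u
  have h' : f x u = 0 := this
  simp [h', ho _ x.2 _ w.2]

/-- Fitting decomposition with respect to a map with adjoint. -/
lemma fitting [FiniteDimensional K V] {f : LinearMap.BilinForm K V}
    (hs : ∀ x y, f x y = f y x) (a b : V →ₗ[K] V) (hab : ∀ x y, f (a x) y = f x (b y))
    (hk : ∀ n, LinearMap.ker (b ^ n) = LinearMap.ker (a ^ n)) :
    ∃ n : ℕ, n ≠ 0 ∧ IsCompl (LinearMap.ker (a ^ n)) (LinearMap.range (a ^ n)) ∧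
      ∀ u ∈ LinearMap.ker (a ^ n), ∀ w ∈ LinearMap.range (a ^ n), f u w = 0 := by
  obtain ⟨k, hk'⟩ := Filter.eventually_atTop.mp a.eventually_isCompl_ker_pow_range_pow
  refine ⟨k + 1, by simp, hk' _ (by simp), ?_⟩
  rintro u hu _ ⟨w, rfl⟩
  have : ∀ (n : ℕ) x y, f ((a ^ n) x) y = f x ((b ^ n) y) := by
    intro n
    induction n with
    | zero => simp
    | succ n ih => intro x y; rw [pow_succ, Module.End.mul_apply, ih, hab, pow_succ', Module.End.mul_apply]
  rw [hs, this]
  rw [← hk, LinearMap.mem_ker] at hu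
  simp [hu]

/-- Descending an involution along a surjection. -/
lemma descend {M : Type*} [AddCommGroup M] [Module K M] {f : LinearMap.BilinForm K V}
    (hn : ∀ x, (∀ y, f x y = 0) → x = 0) (π : M →ₗ[K] V) (hπ : Function.Surjective π)
    (s T : M →ₗ[K] M) (hss : ∀ m, s (s m) = m) (X : V →ₗ[K] V)
    (hT : ∀ m, π (T m) = X (π m)) (hsT : ∀ m, s (T m) = - T (s m))
    (hi : ∀ m m', f (π (s m)) (π (s m')) = f (π m) (π m')) :
    ∃ σ : V →ₗ[K] V, Good f X (-X) σ := by
  obtain ⟨g, hg⟩ := π.exists_rightInverse_of_surjective (LinearMap.range_eq_top.2 hπ)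
  have hg' : ∀ x, π (g x) = x := fun x => LinearMap.congr_fun hg x
  have hk : ∀ m, π m = 0 → π (s m) = 0 := by
    intro m hm
    apply hn
    intro y
    obtain ⟨m', rfl⟩ := hπ y
    rw [← hss m', hi, hm]; simp
  have key : ∀ m, π (s (g (π m))) = π (s m) := by
    intro m
    have := hk (g (π m) - m) (by simp [hg'])
    rwa [map_sub, map_sub, sub_eq_zero] at this
  refine ⟨π ∘ₗ s ∘ₗ g, ?_, ?_, ?_⟩
  · intro x
    obtain ⟨m, rfl⟩ := hπ x
    simp [key, hss]
  · intro x y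
    obtain ⟨m, rfl⟩ := hπ x
    obtain ⟨m', rfl⟩ := hπ y
    simp [key, hi]
  · intro x
    obtain ⟨m, rfl⟩ := hπ x
    simp [← hT, key, hsT]

lemma ideal_pow {q p : K[X]} (hq : Irreducible q) (I : Ideal K[X]) {t : ℕ} (h1 : q ^ (t + 1) ∈ I)
    (h2 : q ^ t ∉ I) (hp : p ∈ I) : q ^ (t + 1) ∣ p := by
  obtain ⟨g, hg⟩ := (IsPrincipalIdealRing.principal I).principal
  change I = Ideal.span {g} at hg
  rw [hg, Ideal.mem_span_singleton] at h1 h2 hp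
  obtain ⟨k, hk, hk'⟩ := (dvd_prime_pow hq.prime _).1 h1
  rcases Nat.lt_or_ge k (t + 1) with h | h
  · exact absurd (hk'.dvd.trans (pow_dvd_pow q (Nat.lt_succ_iff.1 h))) h2
  · exact (pow_dvd_pow q h).trans (hk'.symm.dvd.trans hp)

lemma adj_poly {f : LinearMap.BilinForm K V} {Y : V →ₗ[K] V}
    (hY : ∀ x y, f (Y x) y = - f x (Y y)) (p : K[X]) :
    ∀ x y, f (aeval Y p x) y = f x (aeval Y (p.comp (-X)) y) := by
  have hpow : ∀ (n : ℕ) x y, f ((Y ^ n) x) y = f x (((-Y) ^ n) y) := by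
    intro n
    induction n with
    | zero => simp
    | succ n ih =>
      intro x y
      rw [pow_succ, Module.End.mul_apply, ih, hY, pow_succ', Module.End.mul_apply]
      simp
  induction p using Polynomial.induction_on' with
  | add p q hp hq => intro x y; simp [hp, hq]
  | monomial n a =>
    intro x y
    simp [← C_mul_X_pow_eq_monomial, hpow,
      Module.algebraMap_end_apply]

lemma comp_neg_comp_neg (p : K[X]) : (p.comp (-X)).comp (-X) = p := by
  rw [comp_assoc]; simp

/-- The substitution `X ↦ -X`. -/
noncomputable def st : K[X] →ₗ[K] K[X] := (Polynomial.aeval (-X : K[X])).toLinearMap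

lemma st_apply (p : K[X]) : st p = p.comp (-X) := by
  simp [st, Polynomial.comp, Polynomial.aeval_def]

/-- evaluation at `Y` and `v`. -/
noncomputable def ev (Y : V →ₗ[K] V) (v : V) : K[X] →ₗ[K] V :=
  (LinearMap.applyₗ v) ∘ₗ (Polynomial.aeval (R := K) (A := Module.End K V) Y).toLinearMap

lemma ev_apply (Y : V →ₗ[K] V) (v : V) (p : K[X]) : ev Y v p = aeval Y p v := rfl

lemma st_key {f : LinearMap.BilinForm K V} (hs : ∀ x y, f x y = f y x)
    {Y : V →ₗ[K] V} (hY : ∀ x y, f (Y x) y = - f x (Y y)) (v w : V) (a b : K[X]) :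
    f (ev Y v (st a)) (ev Y w (st b)) = f (ev Y w a) (ev Y v b) := by
  simp only [ev_apply, st_apply]
  rw [adj_poly hY, comp_neg_comp_neg, hs, ← Module.End.mul_apply, ← map_mul, hs (aeval Y a w),
    adj_poly hY b, ← Module.End.mul_apply, ← map_mul, hs, mul_comm]

lemma cyc_good {f : LinearMap.BilinForm K V} (hs : ∀ x y, f x y = f y x)
    (hn : ∀ x, (∀ y, f x y = 0) → x = 0) {Y : V →ₗ[K] V}
    (hY : ∀ x y, f (Y x) y = - f x (Y y)) (v : V) (hv : Function.Surjective (ev Y v)) :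
    ∃ σ : V →ₗ[K] V, Good f Y (-Y) σ := by
  refine descend hn (ev Y v) hv st (LinearMap.mulLeft K X) ?_ Y ?_ ?_ ?_
  · intro m; simp only [st_apply, comp_neg_comp_neg]
  · intro m; simp [ev_apply]
  · intro m; simp [st_apply]
  · intro a b
    rw [st_key hs hY]

lemma bicyc_good {f : LinearMap.BilinForm K V} (hs : ∀ x y, f x y = f y x)
    (hn : ∀ x, (∀ y, f x y = 0) → x = 0) {Y : V →ₗ[K] V}
    (hY : ∀ x y, f (Y x) y = - f x (Y y)) (v w : V)
    (hv : ∀ p q, f (ev Y v p) (ev Y v q) = 0) (hw : ∀ p q, f (ev Y w p) (ev Y w q) = 0)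
    (hsur : Function.Surjective ((ev Y v).coprod (ev Y w))) :
    ∃ σ : V →ₗ[K] V, Good f Y (-Y) σ := by
  have key := fun a b => st_key hs hY v w a b
  refine descend hn ((ev Y v).coprod (ev Y w)) hsur
    ((st ∘ₗ LinearMap.snd K _ _).prod (st ∘ₗ LinearMap.fst K _ _))
    ((LinearMap.mulLeft K X).prodMap (LinearMap.mulLeft K X)) ?_ Y ?_ ?_ ?_
  · rintro ⟨a, b⟩; simp [st_apply, comp_neg_comp_neg]
  · rintro ⟨a, b⟩; simp [ev_apply]
  · rintro ⟨a, b⟩; simp [st_apply]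
  · rintro ⟨a, b⟩ ⟨c, d⟩
    change f ((ev Y v).coprod (ev Y w) (st b, st a)) ((ev Y v).coprod (ev Y w) (st d, st c)) = _
    simp only [LinearMap.coprod_apply, map_add, LinearMap.add_apply, hv, hw, key]
    rw [hs _ (ev Y v (st d)), key, hs (ev Y w d)]
    ring

lemma exists_ne {f : LinearMap.BilinForm K V} (h2 : (2 : K) ≠ 0) (hs : ∀ x y, f x y = f y x)
    (hn : ∀ x, (∀ y, f x y = 0) → x = 0) (N : V →ₗ[K] V) (hN : N ≠ 0)
    (hsa : ∀ x y, f (N x) y = f x (N y)) : ∃ v, f (N v) v ≠ 0 := by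
  by_contra! h
  apply hN
  ext x
  apply hn
  intro y
  have h1 := h (x + y)
  simp only [map_add, LinearMap.add_apply, h] at h1
  rw [hsa y x, hs y] at h1
  have : 2 * f (N x) y = 0 := by linear_combination h1
  exact (mul_eq_zero.1 this).resolve_left h2

lemma isotropic_fix {f : LinearMap.BilinForm K V} (h2 : (2 : K) ≠ 0) (hs : ∀ x y, f x y = f y x)
    {Y : V →ₗ[K] V} (hY : ∀ x y, f (Y x) y = - f x (Y y)) {t : ℕ} (ht : Odd t)
    (hYt : Y ^ (t + 1) = 0) (v w : V) (hvw : f ((Y ^ t) v) w ≠ 0) :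
    ∃ v', f ((Y ^ t) v') w ≠ 0 ∧ ∀ p q, f (ev Y v' p) (ev Y v' q) = 0 := by
  have hpow : ∀ (n : ℕ) x y, f ((Y ^ n) x) y = (-1) ^ n * f x ((Y ^ n) y) := by
    intro n
    induction n with
    | zero => simp
    | succ n ih =>
      intro x y
      have e : (Y ^ (n + 1)) y = Y ((Y ^ n) y) := by rw [pow_succ']; rfl
      have e1 : (Y ^ (n + 1)) x = (Y ^ n) (Y x) := by rw [pow_succ]; rfl
      rw [e, e1, ih, hY]
      ring
  have hbig : ∀ n, t < n → Y ^ n = 0 := fun n hn => pow_eq_zero_of_le hn hYt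
  have hodd : ∀ n, Odd n → ∀ x, f ((Y ^ n) x) x = 0 := by
    intro n hn x
    have := hpow n x x
    rw [hn.neg_one_pow, hs x] at this
    have : 2 * f ((Y ^ n) x) x = 0 := by linear_combination this
    exact (mul_eq_zero.1 this).resolve_left h2
  have main : ∀ k ≤ t + 1, ∃ v', f ((Y ^ t) v') w ≠ 0 ∧
      ∀ i, t + 1 ≤ i + k → f ((Y ^ i) v') v' = 0 := by
    intro k
    induction k with
    | zero => intro _; exact ⟨v, hvw, fun i hi => by simp [hbig i (by omega)]⟩
    | succ k ih =>
      intro hk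
      obtain ⟨v, hv, hv'⟩ := ih (by omega)
      obtain ⟨j, hj⟩ : ∃ j, j + k = t := ⟨t - k, by omega⟩
      rcases Nat.even_or_odd j with hje | hjo
      swap
      · refine ⟨v, hv, fun i hi => ?_⟩
        rcases Nat.lt_or_ge j i with h | h
        · exact hv' i (by omega)
        · have : i = j := by omega
          rw [this]; exact hodd j hjo v
      have hko : Odd k := by
        rw [← hj] at ht
        exact (Nat.odd_add'.1 ht).2 hje
      have hk0 : 1 ≤ k := hko.pos
      -- v' = v + c Y^k w
      set c : K := - f ((Y ^ j) v) v / (2 * f ((Y ^ t) w) v) with hc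
      have hwv : f ((Y ^ t) w) v ≠ 0 := by
        rw [hpow, ht.neg_one_pow, hs w]; simpa using hv
      have expand : ∀ i, t ≤ i + k → i + k ≤ i + k → f ((Y ^ i) (v + c • (Y ^ k) w)) (v + c • (Y ^ k) w) =
          f ((Y ^ i) v) v + c * (f ((Y ^ (i + k)) w) v + (-1) ^ i * f ((Y ^ (i + k)) w) v) := by
        intro i hi _
        have e1 : (Y ^ i) ((Y ^ k) w) = (Y ^ (i + k)) w := by rw [pow_add]; rfl
        have e2 : f ((Y ^ i) v) ((Y ^ k) w) = (-1) ^ i * f ((Y ^ (i + k)) w) v := by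
          rw [hpow, e1, hs]
        have e3 : f ((Y ^ (i + k)) w) ((Y ^ k) w) = 0 := by
          rw [hs, hpow, ← Module.End.mul_apply, ← pow_add, hbig _ (by omega)]; simp
        simp only [map_add, LinearMap.add_apply, map_smul, LinearMap.smul_apply, smul_eq_mul,
          e1, e2, e3]
        ring
      refine ⟨v + c • (Y ^ k) w, ?_, ?_⟩
      · have : (Y ^ t) ((Y ^ k) w) = 0 := by
          rw [← Module.End.mul_apply, ← pow_add, hbig _ (by omega)]; simp
        simpa [this] using hv
      · intro i hi
        rw [expand i (by omega) le_rfl]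
        rcases Nat.lt_or_ge j i with h | h
        · rw [hv' i (by omega), hbig (i + k) (by omega)]; simp
        · have : i = j := by omega
          subst this
          rw [hje.neg_one_pow, hj, hc]
          field_simp
          ring
  obtain ⟨v', h1, h3⟩ := main (t + 1) le_rfl
  refine ⟨v', h1, ?_⟩
  have hz : ∀ p : K[X], f (aeval Y p v') v' = 0 := by
    intro p
    induction p using Polynomial.induction_on' with
    | add p q hp hq => simp [hp, hq]
    | monomial n a =>
      simp [← C_mul_X_pow_eq_monomial, Module.algebraMap_end_apply, h3 n (by omega)]
  intro p q
  rw [ev_apply, ev_apply, adj_poly hY, ← Module.End.mul_apply, ← map_mul, hs, hz]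

/-- annihilator ideal -/
def annI {f : LinearMap.BilinForm K V} {Y : V →ₗ[K] V}
    (hY : ∀ x y, f (Y x) y = - f x (Y y)) (v w : V) : Ideal K[X] where
  carrier := {p | ∀ c, f (ev Y v p) (ev Y w c) = 0}
  zero_mem' := fun c => by simp
  add_mem' := fun {a b} ha hb c => by simp [ha c, hb c]
  smul_mem' := fun a b hb c => by
    have := hb (a.comp (-X) * c)
    simp only [ev_apply, smul_eq_mul, map_mul, Module.End.mul_apply] at this ⊢
    rw [adj_poly hY a, this]

lemma mem_annI {f : LinearMap.BilinForm K V} {Y : V →ₗ[K] V}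
    (hY : ∀ x y, f (Y x) y = - f x (Y y)) (v w : V) (p : K[X]) :
    p ∈ annI hY v w ↔ ∀ c, f (ev Y v p) (ev Y w c) = 0 := Iff.rfl

lemma nil_ann {f : LinearMap.BilinForm K V} {Y : V →ₗ[K] V}
    (hY : ∀ x y, f (Y x) y = - f x (Y y)) {t : ℕ} (hYt : Y ^ (t + 1) = 0) {v w : V}
    (hvw : f ((Y ^ t) v) w ≠ 0) (p : K[X]) (hp : ∀ c, f (ev Y v p) (ev Y w c) = 0) :
    ev Y v p = 0 := by
  have : (X : K[X]) ^ (t + 1) ∣ p := by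
    refine ideal_pow irreducible_X (annI hY v w) ?_ ?_ hp
    · intro c; simp [ev_apply, hYt]
    · intro h
      apply hvw
      simpa [ev_apply] using h 1
  obtain ⟨q, rfl⟩ := this
  simp [ev_apply, hYt]

lemma even_odd (b : K[X]) : ∃ b0 b1 : K[X], b = b0.comp (X ^ 2) + X * b1.comp (X ^ 2) := by
  induction b using Polynomial.induction_on' with
  | add p q hp hq =>
    obtain ⟨a, b, rfl⟩ := hp
    obtain ⟨c, d, rfl⟩ := hq
    exact ⟨a + c, b + d, by simp; ring⟩
  | monomial n a =>
    rw [← C_mul_X_pow_eq_monomial]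
    rcases Nat.even_or_odd' n with ⟨k, rfl | rfl⟩
    · exact ⟨C a * X ^ k, 0, by simp [← pow_mul]⟩
    · exact ⟨0, C a * X ^ k, by simp [← pow_mul]; ring⟩

lemma inv_of_cyc {Y : V →ₗ[K] V} (v w : V) :
    ∀ x ∈ LinearMap.range ((ev Y v).coprod (ev Y w)),
      Y x ∈ LinearMap.range ((ev Y v).coprod (ev Y w)) := by
  rintro _ ⟨⟨a, b⟩, rfl⟩
  exact ⟨(X * a, X * b), by simp [ev_apply]⟩

lemma inv_of_cyc' {Y : V →ₗ[K] V} (v : V) :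
    ∀ x ∈ LinearMap.range (ev Y v), Y x ∈ LinearMap.range (ev Y v) := by
  rintro _ ⟨a, rfl⟩
  exact ⟨X * a, by simp [ev_apply]⟩

lemma indec_good [FiniteDimensional K V] [Nontrivial V] {f : LinearMap.BilinForm K V}
    (h2 : (2 : K) ≠ 0) (hs : ∀ x y, f x y = f y x)
    (hn : ∀ x, (∀ y, f x y = 0) → x = 0) {Y : V →ₗ[K] V}
    (hY : ∀ x y, f (Y x) y = - f x (Y y))
    (hI : ∀ U W : Submodule K V, IsCompl U W → (∀ u ∈ U, ∀ w ∈ W, f u w = 0) →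
      (∀ x ∈ U, Y x ∈ U) → (∀ x ∈ W, Y x ∈ W) → U = ⊥ ∨ W = ⊥) :
    ∃ σ : V →ₗ[K] V, Good f Y (-Y) σ := by
  -- nondegenerate invariant subspaces are trivial
  have hsub : ∀ U : Submodule K V, (∀ x ∈ U, Y x ∈ U) → U ≠ ⊥ →
      (∀ x ∈ U, (∀ y ∈ U, f x y = 0) → x = 0) → U = ⊤ := by
    intro U hU hU0 hrad
    have hrefl : f.IsRefl := fun x y h => by rw [hs]; exact h
    have hc : IsCompl U (f.orthogonal U) := by
      apply LinearMap.BilinForm.isCompl_orthogonal_of_restrict_nondegenerate hrefl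
      refine ⟨fun x hx => Subtype.ext (hrad _ x.2 fun y hy => hx ⟨y, hy⟩),
        fun x hx => Subtype.ext (hrad _ x.2 fun y hy => ?_)⟩
      rw [hs]; exact hx ⟨y, hy⟩
    have ho : ∀ u ∈ U, ∀ w ∈ f.orthogonal U, f u w = 0 := fun u hu w hw => hw u hu
    have := hI U (f.orthogonal U) hc ho hU (fun x hx u hu => by
      have h := hY u x
      have h' : f (Y u) x = 0 := hx _ (hU u hu)
      change f u (Y x) = 0
      rw [h'] at h
      simpa using h.symm)
    have hW := this.resolve_left hU0
    have := hc.sup_eq_top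
    rwa [hW, sup_bot_eq] at this
  -- self-adjoint elements are nilpotent or injective
  have hsa : ∀ q : K[X], ∀ x y, f (aeval (Y ^ 2) q x) y = f x (aeval (Y ^ 2) q y) := by
    intro q x y
    have e : aeval (Y ^ 2) q = aeval Y (q.comp (X ^ 2)) := by simp [aeval_comp]
    rw [e, adj_poly hY, comp_assoc]
    simp
  have hcomm : ∀ q : K[X], ∀ x, Y (aeval (Y ^ 2) q x) = aeval (Y ^ 2) q (Y x) := by
    intro q x
    have e : aeval (Y ^ 2) q = aeval Y (q.comp (X ^ 2)) := by simp [aeval_comp]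
    have : aeval Y (X * q.comp (X ^ 2)) = aeval Y (q.comp (X ^ 2) * X) := by rw [mul_comm]
    rw [map_mul, map_mul, aeval_X] at this
    rw [e]
    exact LinearMap.congr_fun this x
  have hfit : ∀ q : K[X], (∃ n, aeval (Y ^ 2) q ^ n = 0) ∨
      Function.Injective (aeval (Y ^ 2) q) := by
    intro q
    obtain ⟨n, hn0, hc, ho⟩ := fitting hs (aeval (Y ^ 2) q) (aeval (Y ^ 2) q) (hsa q) (fun _ => rfl)
    have e := map_pow (aeval (Y ^ 2)) q n
    have i1 : ∀ x ∈ LinearMap.ker (aeval (Y ^ 2) q ^ n), Y x ∈ LinearMap.ker (aeval (Y ^ 2) q ^ n) := by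
      intro x hx
      rw [LinearMap.mem_ker] at hx ⊢
      rw [← e] at hx ⊢
      rw [← hcomm, hx, map_zero]
    have i2 : ∀ x ∈ LinearMap.range (aeval (Y ^ 2) q ^ n), Y x ∈ LinearMap.range (aeval (Y ^ 2) q ^ n) := by
      rintro _ ⟨x, rfl⟩
      refine ⟨Y x, ?_⟩
      rw [← e, hcomm]
    rcases hI _ _ hc ho i1 i2 with h | h
    · right
      rw [← LinearMap.ker_eq_bot, eq_bot_iff, ← h]
      intro x hx
      rw [LinearMap.mem_ker] at hx ⊢
      obtain ⟨m, rfl⟩ := Nat.exists_eq_succ_of_ne_zero hn0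
      rw [pow_succ, Module.End.mul_apply, hx, map_zero]
    · left
      exact ⟨n, LinearMap.range_eq_bot.1 h⟩
  have hone : (1 : Module.End K V) ≠ 0 := one_ne_zero
  -- minimal nilpotency exponents
  have hmin : ∀ a : Module.End K V, (∃ n, a ^ n = 0) → ∃ t, a ^ (t + 1) = 0 ∧ a ^ t ≠ 0 := by
    intro a h
    classical
    have h0 : Nat.find h ≠ 0 := by
      intro h0
      have := Nat.find_spec h
      rw [h0, pow_zero] at this
      exact hone this
    obtain ⟨t, ht⟩ := Nat.exists_eq_succ_of_ne_zero h0
    exact ⟨t, by rw [← Nat.succ_eq_add_one, ← ht]; exact Nat.find_spec h,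
      Nat.find_min h (by omega)⟩
  rcases hfit X with ⟨n, hnil⟩ | hinj
  · -- nilpotent case
    rw [aeval_X, ← pow_mul] at hnil
    obtain ⟨t, ht1, ht0⟩ := hmin Y ⟨_, hnil⟩
    rcases Nat.even_or_odd t with hte | hto
    · obtain ⟨v, hv⟩ := exists_ne h2 hs hn (Y ^ t) ht0 (fun x y => by
        have := adj_poly hY (X ^ t) x y
        simpa [hte.neg_pow] using this)
      apply cyc_good hs hn hY v
      rw [← LinearMap.range_eq_top]
      apply hsub _ (inv_of_cyc' v)
      · intro h
        apply hv
        have : v ∈ LinearMap.range (ev Y v) := ⟨1, by simp [ev_apply]⟩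
        rw [h, Submodule.mem_bot] at this
        simp [this]
      · rintro _ ⟨p, rfl⟩ h
        exact nil_ann hY ht1 hv p fun c => h _ ⟨c, rfl⟩
    · obtain ⟨v, w, hvw⟩ : ∃ v w, f ((Y ^ t) v) w ≠ 0 := by
        by_contra! h
        exact ht0 (LinearMap.ext fun v => hn _ (h v))
      obtain ⟨v, hvw, hv⟩ := isotropic_fix h2 hs hY hto ht1 v w hvw
      have hflip : ∀ v w, f ((Y ^ t) v) w ≠ 0 → f ((Y ^ t) w) v ≠ 0 := by
        intro v w h
        have := adj_poly hY (X ^ t) v w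
        simp [hto.neg_pow] at this
        rw [hs]
        intro h'
        rw [h'] at this
        exact h (by simpa using this)
      obtain ⟨w, hwv, hw⟩ := isotropic_fix h2 hs hY hto ht1 w v (hflip _ _ hvw)
      have hvw := hflip _ _ hwv
      apply bicyc_good hs hn hY v w hv hw
      rw [← LinearMap.range_eq_top]
      apply hsub _ (inv_of_cyc v w)
      · intro h
        apply hvw
        have : v ∈ LinearMap.range ((ev Y v).coprod (ev Y w)) := ⟨(1, 0), by simp [ev_apply]⟩
        rw [h, Submodule.mem_bot] at this
        simp [this]
      · rintro _ ⟨⟨a, b⟩, rfl⟩ h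
        have ha : ev Y v a = 0 := by
          apply nil_ann hY ht1 hvw
          intro c
          have := h _ ⟨(0, c), rfl⟩
          simpa [hw] using this
        have hb : ev Y w b = 0 := by
          apply nil_ann hY ht1 hwv
          intro c
          have := h _ ⟨(c, 0), rfl⟩
          simpa [hv] using this
        simp [ha, hb]
  · -- invertible case
    rw [aeval_X] at hinj
    have hint : IsIntegral K (Y ^ 2 : Module.End K V) := Algebra.IsIntegral.isIntegral _
    have hnu : ¬ IsUnit (minpoly K (Y ^ 2 : Module.End K V)) := minpoly.not_isUnit K _
    obtain ⟨q, hq, r, hr⟩ := WfDvdMonoid.exists_irreducible_factor hnu (minpoly.ne_zero hint)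
    have hqn : ∃ n, aeval (Y ^ 2) q ^ n = 0 := by
      refine (hfit q).resolve_right fun hin => ?_
      have h0 : aeval (Y ^ 2) r = 0 := by
        have := minpoly.aeval K (Y ^ 2 : Module.End K V)
        rw [hr, map_mul] at this
        ext x
        apply hin
        have := LinearMap.congr_fun this x
        simpa using this
      have hr0 : r ≠ 0 := by rintro rfl; exact minpoly.ne_zero hint (by simpa using hr)
      have hd := minpoly.dvd K _ h0
      rw [hr] at hd
      have : q ∣ 1 := by
        rw [mul_comm] at hd
        exact (mul_dvd_mul_iff_left hr0).1 (by simpa using hd)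
      exact hq.not_isUnit (isUnit_of_dvd_one this)
    obtain ⟨t, ht1, ht0⟩ := hmin _ hqn
    rw [← map_pow] at ht1 ht0
    obtain ⟨v, hv⟩ := exists_ne h2 hs hn _ ht0 (hsa _)
    apply cyc_good hs hn hY v
    rw [← LinearMap.range_eq_top]
    apply hsub _ (inv_of_cyc' v)
    · intro h
      apply hv
      have : v ∈ LinearMap.range (ev Y v) := ⟨1, by simp [ev_apply]⟩
      rw [h, Submodule.mem_bot] at this
      simp [this]
    · rintro _ ⟨b, rfl⟩ h
      have hb : b ∈ annI hY v v := fun c => h _ ⟨c, rfl⟩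
      have hstb : st b ∈ annI hY v v := by
        intro c
        rw [← comp_neg_comp_neg c, ← st_apply, ← st_apply, st_key hs hY]
        exact hb _
      have hev : ∀ q : K[X], ev Y v (q.comp (X ^ 2)) = aeval (Y ^ 2) q v := by
        intro q; simp [ev_apply, aeval_comp]
      have hIe : ∀ c : K[X], c.comp (X ^ 2) ∈ annI hY v v → aeval (Y ^ 2) c v = 0 := by
        intro c hc
        have : q ^ (t + 1) ∣ c := by
          refine ideal_pow hq (Ideal.comap (Polynomial.compRingHom (X ^ 2)) (annI hY v v)) ?_ ?_ hc
          · intro d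
            change f (ev Y v ((q ^ (t + 1)).comp (X ^ 2))) _ = 0
            rw [hev, ht1]; simp
          · intro hd
            have : f (ev Y v ((q ^ t).comp (X ^ 2))) (ev Y v 1) = 0 := hd 1
            rw [hev] at this
            exact hv (by simpa [ev_apply] using this)
        obtain ⟨d, rfl⟩ := this
        rw [map_mul, ht1]; simp
      obtain ⟨b0, b1, rfl⟩ := even_odd b
      have hst : st (b0.comp (X ^ 2) + X * b1.comp (X ^ 2)) =
          b0.comp (X ^ 2) - X * b1.comp (X ^ 2) := by
        rw [st_apply]; simp [comp_assoc]; ring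
      rw [hst] at hstb
      have hC : C (2 : K)⁻¹ * C (2 : K) = 1 := by rw [← C_mul, inv_mul_cancel₀ h2, C_1]
      have hC2 : (C (2 : K)) = 2 := rfl
      have m0 : b0.comp (X ^ 2) ∈ annI hY v v := by
        have := (annI hY v v).mul_mem_left (C (2 : K)⁻¹) (add_mem hb hstb)
        convert this using 1
        rw [hC2] at hC
        linear_combination (- b0.comp (X ^ 2)) * hC
      have m1 : X * b1.comp (X ^ 2) ∈ annI hY v v := by
        have := sub_mem hb m0
        simpa using this
      have z0 := hIe b0 m0
      have z1 := hIe (X * b1) (by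
        have := (annI hY v v).mul_mem_left X m1
        convert this using 1
        simp; ring)
      have z2 : aeval (Y ^ 2) b1 v = 0 := by
        apply hinj
        rw [map_mul, aeval_X] at z1
        rw [map_zero]; exact z1
      rw [map_add, hev, z0, zero_add, ev_apply, map_mul, aeval_X, Module.End.mul_apply,
        ← ev_apply, hev, z2, map_zero]

universe u v

lemma skew_good {K : Type u} [Field K] (h2 : (2 : K) ≠ 0) (n : ℕ) :
    ∀ (V : Type v) [AddCommGroup V] [Module K V] [FiniteDimensional K V]
    (f : LinearMap.BilinForm K V) (_ : ∀ x y, f x y = f y x)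
    (_ : ∀ x, (∀ y, f x y = 0) → x = 0) (Y : V →ₗ[K] V)
    (_ : ∀ x y, f (Y x) y = - f x (Y y)) (_ : Module.finrank K V = n),
    ∃ σ : V →ₗ[K] V, Good f Y (-Y) σ := by
  induction n using Nat.strong_induction_on with
  | _ n ih =>
    intro V _ _ _ f hs hn Y hY hV
    rcases subsingleton_or_nontrivial V with hsub | hnt
    · exact ⟨LinearMap.id, fun x => rfl, fun x y => rfl, fun x => Subsingleton.elim _ _⟩
    by_cases hI : ∀ U W : Submodule K V, IsCompl U W → (∀ u ∈ U, ∀ w ∈ W, f u w = 0) →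
      (∀ x ∈ U, Y x ∈ U) → (∀ x ∈ W, Y x ∈ W) → U = ⊥ ∨ W = ⊥
    · exact indec_good h2 hs hn hY hI
    push Not at hI
    obtain ⟨U, W, hc, ho, hU, hW, hU0, hW0⟩ := hI
    have hfr := Submodule.finrank_add_eq_of_isCompl hc
    have hU1 : 0 < Module.finrank K U := Nat.pos_of_ne_zero fun h =>
      hU0 (Submodule.finrank_eq_zero.1 h)
    have hW1 : 0 < Module.finrank K W := Nat.pos_of_ne_zero fun h =>
      hW0 (Submodule.finrank_eq_zero.1 h)
    have ho' : ∀ u ∈ W, ∀ w ∈ U, f u w = 0 := fun u hu w hw => by rw [hs]; exact ho w hw u hu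
    obtain ⟨σ1, h1⟩ := ih _ (by omega) U (f.restrict U) (fun x y => hs x y)
      (restrict_nd hn hc ho) (Y.restrict hU) (fun x y => hY x y) rfl
    obtain ⟨σ2, h3⟩ := ih _ (by omega) W (f.restrict W) (fun x y => hs x y)
      (restrict_nd hn hc.symm ho') (Y.restrict hW) (fun x y => hY x y) rfl
    obtain ⟨σ, hσ, -⟩ := glue hs hc ho Y (-Y) hU hW (fun x hx => neg_mem (hU x hx))
      (fun x hx => neg_mem (hW x hx)) σ1 σ2 h1 h3
    exact ⟨σ, hσ⟩

lemma cay [FiniteDimensional K V] (h2 : (2 : K) ≠ 0) {f : LinearMap.BilinForm K V}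
    (hs : ∀ x y, f x y = f y x) (hn : ∀ x, (∀ y, f x y = 0) → x = 0) (φ ψ : V →ₗ[K] V)
    (hψφ : ∀ x, ψ (φ x) = x) (hφ : ∀ x y, f (φ x) (φ y) = f x y)
    (hinj : ∀ x, φ x + x = 0 → x = 0) : ∃ σ : V →ₗ[K] V, Good f φ ψ σ := by
  have hE : Function.Injective (φ + 1 : V →ₗ[K] V) := by
    rw [← LinearMap.ker_eq_bot, eq_bot_iff]
    intro x hx
    exact hinj x (by simpa using hx)
  let E := LinearEquiv.ofInjectiveEndo (φ + 1 : V →ₗ[K] V) hE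
  have hE' : ∀ x, E x = φ x + x := fun x => rfl
  let Y : V →ₗ[K] V := (φ - 1) ∘ₗ E.symm.toLinearMap
  have hYE : ∀ x, Y (E x) = φ x - x := fun x => by simp [Y]
  obtain ⟨σ, i1, i2, i3⟩ := skew_good h2 _ V f hs hn Y (by
    intro x y
    obtain ⟨x, rfl⟩ := E.surjective x
    obtain ⟨y, rfl⟩ := E.surjective y
    rw [hYE, hYE, hE', hE']
    simp only [map_add, map_sub, LinearMap.add_apply, LinearMap.sub_apply, hφ]
    ring) rfl
  refine ⟨σ, i1, i2, ?_⟩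
  intro x
  have h := i3 (E x)
  obtain ⟨y, hy⟩ := E.surjective (σ (E x))
  rw [hYE, ← hy, LinearMap.neg_apply, hYE, map_sub] at h
  rw [hE', hE', map_add] at hy
  have e1 : (2 : K) • σ (φ x) = (2 : K) • y := by
    rw [two_smul, two_smul]
    linear_combination (norm := module) h - hy
  have e2 : (2 : K) • σ x = (2 : K) • φ y := by
    rw [two_smul, two_smul]
    linear_combination (norm := module) - h - hy
  have e1' := smul_right_injective V h2 e1
  have e2' := smul_right_injective V h2 e2
  rw [e1', e2', hψφ]

lemma fit_isom [FiniteDimensional K V] {f : LinearMap.BilinForm K V}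
    (hs : ∀ x y, f x y = f y x) (φ ψ : V →ₗ[K] V)
    (hψφ : ∀ x, ψ (φ x) = x) (hφψ : ∀ x, φ (ψ x) = x) (hφ : ∀ x y, f (φ x) (φ y) = f x y) :
    ∃ n : ℕ, n ≠ 0 ∧ IsCompl (LinearMap.ker ((φ + 1) ^ n)) (LinearMap.range ((φ + 1) ^ n)) ∧
      ∀ u ∈ LinearMap.ker ((φ + 1) ^ n), ∀ w ∈ LinearMap.range ((φ + 1) ^ n), f u w = 0 := by
  refine fitting hs (φ + 1) (ψ + 1) ?_ ?_
  · intro x y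
    have : f (φ x) y = f x (ψ y) := by rw [← hφ x (ψ y), hφψ]
    simp [this]
  · intro n
    have e1 : ψ * φ = 1 := LinearMap.ext hψφ
    have e2 : φ * ψ = 1 := LinearMap.ext hφψ
    have hc1 : Commute ψ (φ + 1) := by
      apply Commute.add_right _ (Commute.one_right _)
      change ψ * φ = φ * ψ
      rw [e1, e2]
    have hc2 : Commute φ (ψ + 1) := by
      apply Commute.add_right _ (Commute.one_right _)
      change φ * ψ = ψ * φ
      rw [e1, e2]
    have a1 : (ψ + 1) ^ n = ψ ^ n * (φ + 1) ^ n := by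
      rw [← hc1.mul_pow, mul_add, e1, mul_one, add_comm]
    have a2 : (φ + 1) ^ n = φ ^ n * (ψ + 1) ^ n := by
      rw [← hc2.mul_pow, mul_add, e2, mul_one, add_comm]
    apply le_antisymm
    · intro x hx
      rw [LinearMap.mem_ker] at hx ⊢
      rw [a2, Module.End.mul_apply, hx, map_zero]
    · intro x hx
      rw [LinearMap.mem_ker] at hx ⊢
      rw [a1, Module.End.mul_apply, hx, map_zero]

lemma comm_inv {a χ : V →ₗ[K] V} (h : Commute χ a) (n : ℕ) :
    (∀ x ∈ LinearMap.ker (a ^ n), χ x ∈ LinearMap.ker (a ^ n)) ∧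
    (∀ x ∈ LinearMap.range (a ^ n), χ x ∈ LinearMap.range (a ^ n)) := by
  have h' : ∀ x, χ ((a ^ n) x) = (a ^ n) (χ x) := fun x =>
    LinearMap.congr_fun (h.pow_right n : χ * a ^ n = a ^ n * χ) x
  constructor
  · intro x hx
    rw [LinearMap.mem_ker] at hx ⊢
    rw [← h', hx, map_zero]
  · rintro _ ⟨x, rfl⟩
    exact ⟨χ x, (h' x).symm⟩

lemma range_inj {a : V →ₗ[K] V} {n : ℕ} (hn : n ≠ 0)
    (hc : IsCompl (LinearMap.ker (a ^ n)) (LinearMap.range (a ^ n))) (x : V)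
    (hx : x ∈ LinearMap.range (a ^ n)) (h0 : a x = 0) : x = 0 := by
  have : x ∈ LinearMap.ker (a ^ n) ⊓ LinearMap.range (a ^ n) := by
    refine ⟨?_, hx⟩
    obtain ⟨m, rfl⟩ := Nat.exists_eq_succ_of_ne_zero hn
    change (a ^ (m + 1)) x = 0
    rw [pow_succ, Module.End.mul_apply, h0, map_zero]
  rwa [hc.inf_eq_bot, Submodule.mem_bot] at this

/-- Wonenburger: an isometry is inverted by an involutive isometry. -/
lemma wonen [FiniteDimensional K V] (h2 : (2 : K) ≠ 0) {f : LinearMap.BilinForm K V}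
    (hs : ∀ x y, f x y = f y x) (hn : ∀ x, (∀ y, f x y = 0) → x = 0) (φ ψ : V →ₗ[K] V)
    (hψφ : ∀ x, ψ (φ x) = x) (hφψ : ∀ x, φ (ψ x) = x) (hφ : ∀ x y, f (φ x) (φ y) = f x y) :
    ∃ σ : V →ₗ[K] V, Good f φ ψ σ := by
  obtain ⟨n, hn0, hc, ho⟩ := fit_isom hs φ ψ hψφ hφψ hφ
  have hc1 : Commute φ (φ + 1) := (Commute.refl φ).add_right (Commute.one_right _)
  have hc2 : Commute ψ (φ + 1) := by
    apply Commute.add_right _ (Commute.one_right _)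
    change ψ * φ = φ * ψ
    rw [show ψ * φ = 1 from LinearMap.ext hψφ, show φ * ψ = 1 from LinearMap.ext hφψ]
  obtain ⟨hPU, hPW⟩ := comm_inv hc1 n
  obtain ⟨hQU, hQW⟩ := comm_inv hc2 n
  have ho' : ∀ u ∈ LinearMap.range ((φ + 1) ^ n), ∀ w ∈ LinearMap.ker ((φ + 1) ^ n), f u w = 0 :=
    fun u hu w hw => by rw [hs]; exact ho w hw u hu
  obtain ⟨σ2, h3⟩ := cay h2 (f := f.restrict (LinearMap.range ((φ + 1) ^ n)))
    (fun x y => hs x y) (restrict_nd hn hc.symm ho') (φ.restrict hPW) (ψ.restrict hQW)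
    (fun x => Subtype.ext (hψφ x)) (fun x y => hφ x y)
    (fun x hx => Subtype.ext (range_inj hn0 hc x x.2 (by simpa using congrArg Subtype.val hx)))
  obtain ⟨σ1, h1⟩ := cay h2 (f := f.restrict (LinearMap.ker ((φ + 1) ^ n)))
    (fun x y => hs x y) (restrict_nd hn hc ho) (-φ.restrict hPU) (-ψ.restrict hQU)
    (fun x => Subtype.ext (by simp [hψφ])) (fun x y => by simp [hφ])
    (fun x hx => by
      have hx' : φ x = x := by
        have := congrArg Subtype.val hx
        simp only [LinearMap.neg_apply, Submodule.coe_add, Submodule.coe_neg,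
          LinearMap.coe_restrict_apply, ZeroMemClass.coe_zero] at this
        rw [neg_add_eq_zero] at this
        exact this
      have hm : ∀ m : ℕ, ((φ + 1) ^ m) (x : V) = (2 : K) ^ m • (x : V) := by
        intro m
        induction m with
        | zero => simp
        | succ m ihm =>
          rw [pow_succ', Module.End.mul_apply, ihm, map_smul, LinearMap.add_apply, hx',
            Module.End.one_apply, ← two_smul K, smul_smul, pow_succ]
      have h0 := x.2
      rw [LinearMap.mem_ker, hm] at h0
      exact Subtype.ext ((smul_eq_zero.1 h0).resolve_left (pow_ne_zero _ h2)))
  have h1' : Good (f.restrict (LinearMap.ker ((φ + 1) ^ n))) (φ.restrict hPU) (ψ.restrict hQU)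
      σ1 := by
    obtain ⟨a, b, c⟩ := h1
    refine ⟨a, b, fun x => ?_⟩
    have := c x
    simpa using this
  obtain ⟨σ, hσ, -⟩ := glue hs hc ho φ ψ hPU hPW hQU hQW σ1 σ2 h1' h3
  exact ⟨σ, hσ⟩

lemma det_one [FiniteDimensional K V] {f : LinearMap.BilinForm K V}
    (hn : ∀ x, (∀ y, f x y = 0) → x = 0) (φ ψ : V →ₗ[K] V)
    (hφψ : ∀ x, φ (ψ x) = x) (hφ : ∀ x y, f (φ x) (φ y) = f x y)
    (hinj : ∀ x, φ x + x = 0 → x = 0) : LinearMap.det φ = 1 := by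
  have hfi : Function.Injective f := by
    rw [← LinearMap.ker_eq_bot, eq_bot_iff]
    intro x hx
    rw [LinearMap.mem_ker] at hx
    exact hn x fun y => by simp [hx]
  let F : V ≃ₗ[K] Module.Dual K V := LinearEquiv.ofInjectiveOfFinrankEq f hfi
    (Subspace.dual_finrank_eq).symm
  have hF : ∀ x y, F x y = f x y := fun x y => rfl
  have hd : LinearMap.det (ψ + 1) = LinearMap.det (φ + 1) := by
    rw [← LinearMap.det_dualMap (φ + 1), ← LinearMap.det_conj (ψ + 1) F]
    congr 1
    ext g y
    obtain ⟨x, rfl⟩ := F.surjective g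
    have : f (ψ x) y = f x (φ y) := by rw [← hφ (ψ x) y, hφψ]
    simp [hF, this]
  have hm : LinearMap.det φ * LinearMap.det (ψ + 1) = LinearMap.det (φ + 1) := by
    rw [← map_mul, mul_add, show φ * ψ = 1 from LinearMap.ext hφψ, mul_one, add_comm]
  have hne : LinearMap.det (φ + 1) ≠ 0 := by
    intro h0
    have := LinearMap.bot_lt_ker_of_det_eq_zero h0
    rw [bot_lt_iff_ne_bot] at this
    apply this
    rw [eq_bot_iff]
    intro x hx
    exact hinj x (by simpa using hx)
  rw [hd] at hm
  exact mul_right_cancel₀ hne (by rw [hm, one_mul])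

lemma det_unip [FiniteDimensional K V] (β : V →ₗ[K] V) (n : ℕ) (h : (β + 1) ^ n = 0) :
    LinearMap.det β = (-1) ^ Module.finrank K V := by
  have h1 := LinearMap.eval_charpoly (β + 1) (1 : K)
  rw [(LinearMap.charpoly_eq_X_pow_iff _).2 fun m => ⟨n, by rw [h]; rfl⟩] at h1
  have e : algebraMap K (Module.End K V) 1 - (β + 1) = (-1 : K) • β := by
    rw [map_one]; simp
  rw [e, LinearMap.det_smul] at h1
  simp only [eval_pow, eval_X, one_pow] at h1
  have h2 : ((-1 : K) ^ Module.finrank K V) * (-1) ^ Module.finrank K V = 1 := by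
    rw [← mul_pow]; simp
  linear_combination (- (-1 : K) ^ Module.finrank K V) * h1 - LinearMap.det β * h2

lemma neg_good {f : LinearMap.BilinForm K V} {P Q σ : V →ₗ[K] V} (h : Good f P Q σ) :
    Good f P Q (-σ) := by
  obtain ⟨a, b, c⟩ := h
  exact ⟨fun x => by simp [a], fun x y => by simp [b], fun x => by simp [c]⟩

/-- Main step. -/
lemma special_inv [FiniteDimensional K V] (h2 : (2 : K) ≠ 0) {f : LinearMap.BilinForm K V}
    (hs : ∀ x y, f x y = f y x) (hn : ∀ x, (∀ y, f x y = 0) → x = 0) (φ ψ : V →ₗ[K] V)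
    (hψφ : ∀ x, ψ (φ x) = x) (hφψ : ∀ x, φ (ψ x) = x) (hφ : ∀ x y, f (φ x) (φ y) = f x y)
    (α α' : V →ₗ[K] V) (hα1 : ∀ x, α' (α x) = x) (hα2 : ∀ x, α (α' x) = x)
    (hα : ∀ x y, f (α x) (α y) = f x y)
    (hdα : LinearMap.det α = 1) (hαφ : ∀ x, α (φ x) = ψ (α x)) :
    ∃ σ : V →ₗ[K] V, Good f φ ψ σ ∧ LinearMap.det σ = 1 := by
  have hpm : ∀ σ : V →ₗ[K] V, Good f φ ψ σ → LinearMap.det σ = 1 ∨ LinearMap.det σ = -1 := by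
    intro σ h
    have : LinearMap.det (σ * σ) = 1 := by
      rw [show σ * σ = 1 from LinearMap.ext h.1, map_one]
    rw [map_mul] at this
    exact mul_self_eq_one_iff.1 this
  obtain ⟨σ, hσ⟩ := wonen h2 hs hn φ ψ hψφ hφψ hφ
  rcases hpm σ hσ with h | hdσ
  · exact ⟨σ, hσ, h⟩
  obtain ⟨s1, s2, s3⟩ := hσ
  have hαψ : ∀ x, α (ψ x) = φ (α x) := fun x => by
    have := hαφ (ψ x)
    rw [hφψ] at this
    rw [this, hφψ]
  have s4 : ∀ x, σ (ψ x) = φ (σ x) := fun x => by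
    have := s3 (ψ x)
    rw [hφψ] at this
    rw [this, hφψ]
  let β : V →ₗ[K] V := α * σ
  let β' : V →ₗ[K] V := σ * α'
  have hβ : ∀ x, β x = α (σ x) := fun x => rfl
  have hβ' : ∀ x, β' x = σ (α' x) := fun x => rfl
  have b1 : ∀ x, β' (β x) = x := fun x => by rw [hβ, hβ', hα1, s1]
  have b2 : ∀ x, β (β' x) = x := fun x => by rw [hβ, hβ', s1, hα2]
  have b3 : ∀ x y, f (β x) (β y) = f x y := fun x y => by rw [hβ, hβ, hα, s2]
  have hdβ : LinearMap.det β = -1 := by rw [map_mul, hdα, hdσ, one_mul]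
  obtain ⟨n, hn0, hc, ho⟩ := fit_isom hs β β' b1 b2 b3
  have c1 : Commute φ (β + 1) := by
    apply Commute.add_right _ (Commute.one_right _)
    refine LinearMap.ext fun x => ?_
    change φ (α (σ x)) = α (σ (φ x))
    rw [s3, hαψ]
  have c2 : Commute ψ (β + 1) := by
    apply Commute.add_right _ (Commute.one_right _)
    refine LinearMap.ext fun x => ?_
    change ψ (α (σ x)) = α (σ (ψ x))
    rw [s4, hαφ]
  have c3 : Commute β (β + 1) := (Commute.refl β).add_right (Commute.one_right _)
  have c4 : Commute β' (β + 1) := by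
    apply Commute.add_right _ (Commute.one_right _)
    change β' * β = β * β'
    rw [show β' * β = 1 from LinearMap.ext b1, show β * β' = 1 from LinearMap.ext b2]
  obtain ⟨hPU, hPW⟩ := comm_inv c1 n
  obtain ⟨hQU, hQW⟩ := comm_inv c2 n
  obtain ⟨hBU, hBW⟩ := comm_inv c3 n
  obtain ⟨hB'U, hB'W⟩ := comm_inv c4 n
  have ho' : ∀ u ∈ LinearMap.range ((β + 1) ^ n), ∀ w ∈ LinearMap.ker ((β + 1) ^ n), f u w = 0 :=
    fun u hu w hw => by rw [hs]; exact ho w hw u hu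
  have d1 : LinearMap.det (β.restrict hBW) = 1 := by
    refine det_one (f := f.restrict (LinearMap.range ((β + 1) ^ n)))
      (restrict_nd hn hc.symm ho') (β.restrict hBW) (β'.restrict hB'W)
      (fun x => Subtype.ext (b2 x)) (fun x y => b3 x y)
      (fun x hx => Subtype.ext (range_inj hn0 hc x x.2 (by simpa using congrArg Subtype.val hx)))
  have d2 : LinearMap.det (β.restrict hBU) =
      (-1) ^ Module.finrank K (LinearMap.ker ((β + 1) ^ n)) := by
    apply det_unip _ n
    have hm : ∀ (m : ℕ) (x : LinearMap.ker ((β + 1) ^ n)),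
        ((((β.restrict hBU + 1) ^ m) x : LinearMap.ker ((β + 1) ^ n)) : V)
          = ((β + 1) ^ m) (x : V) := by
      intro m
      induction m with
      | zero => intro x; simp
      | succ m ihm =>
        intro x
        rw [pow_succ, Module.End.mul_apply, ihm, pow_succ, Module.End.mul_apply]
        rfl
    ext x
    rw [hm]
    exact x.2
  have d3 := compl_det hc β (β.restrict hBU) (β.restrict hBW) (fun _ => rfl) (fun _ => rfl)
  rw [hdβ, d1, d2, mul_one] at d3
  obtain ⟨σ1, h1⟩ := wonen h2 (f := f.restrict (LinearMap.ker ((β + 1) ^ n)))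
    (fun x y => hs x y) (restrict_nd hn hc ho) (φ.restrict hPU) (ψ.restrict hQU)
    (fun x => Subtype.ext (hψφ x)) (fun x => Subtype.ext (hφψ x)) (fun x y => hφ x y)
  obtain ⟨σ2, h3⟩ := wonen h2 (f := f.restrict (LinearMap.range ((β + 1) ^ n)))
    (fun x y => hs x y) (restrict_nd hn hc.symm ho') (φ.restrict hPW) (ψ.restrict hQW)
    (fun x => Subtype.ext (hψφ x)) (fun x => Subtype.ext (hφψ x)) (fun x y => hφ x y)
  obtain ⟨τ, hτ, dτ⟩ := glue hs hc ho φ ψ hPU hPW hQU hQW σ1 σ2 h1 h3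
  rcases hpm τ hτ with h | h
  · exact ⟨τ, hτ, h⟩
  obtain ⟨ρ, hρ, dρ⟩ := glue hs hc ho φ ψ hPU hPW hQU hQW (-σ1) σ2 (neg_good h1) h3
  refine ⟨ρ, hρ, ?_⟩
  rw [dρ, show -σ1 = (-1 : K) • σ1 from (neg_one_smul K σ1).symm, LinearMap.det_smul, ← d3, mul_assoc, ← dτ, h]
  ring

/-- If `φ ∈ SO(V)` is reversed by an element of `SO(V)`, then `φ` is a
product of two involutions of `SO(V)`. -/
theorem stmt11 [FiniteDimensional K V] (hK : ringChar K ≠ 2)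
    (f : LinearMap.BilinForm K V) (hsymm : f.IsSymm) (hnd : f.Nondegenerate)
    (φ : V ≃ₗ[K] V) (hφ : φ ∈ specialOrthGroup f)
    (hrev : IsReversibleIn (specialOrthGroup f) φ) :
    IsBireflectionalIn (specialOrthGroup f) φ := by
  have h2 : (2 : K) ≠ 0 := Ring.two_ne_zero hK
  obtain ⟨α, ⟨hα, hdα⟩, hαφ⟩ := hrev
  have hαφ' : α * φ = φ⁻¹ * α := by rw [← hαφ]; group
  obtain ⟨hφi, hφd⟩ := hφ
  obtain ⟨σ, ⟨s1, s2, s3⟩, hd⟩ := special_inv h2 (fun x y => hsymm.eq x y) hnd.1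
    (φ : V →ₗ[K] V) (φ.symm : V →ₗ[K] V) (fun x => by simp) (fun x => by simp) hφi
    (α : V →ₗ[K] V) (α.symm : V →ₗ[K] V) (fun x => by simp) (fun x => by simp) hα hdα
    (fun x => LinearEquiv.congr_fun hαφ' x)
  let S : V ≃ₗ[K] V := LinearEquiv.ofInvolutive σ s1
  have hS : S ∈ specialOrthGroup f := ⟨s2, hd⟩
  have hS2 : S ^ 2 = 1 := by
    rw [pow_two]; exact LinearEquiv.ext s1
  have hSφ : S * φ = φ⁻¹ * S := LinearEquiv.ext s3
  refine ⟨S, S * φ, hS, mul_mem hS ⟨hφi, hφd⟩, hS2, ?_, ?_⟩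
  · rw [pow_two]
    nth_rewrite 1 [hSφ]
    rw [mul_assoc, ← mul_assoc S S, ← pow_two, hS2, one_mul, inv_mul_cancel]
  · rw [← mul_assoc, ← pow_two, hS2, one_mul]

end Biref
end
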